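/- (Lackner–Panholzer, Theorem 4.10, critical case m = n/2) As k → ∞, with n = 2k, the total number M_{n,n/2} of (n, n/2)-mapping parking functions satisfies M_{2k,k} / ( (√2 · 3^(1/6) · Γ(2/3) / √π) · (2k)^(3k − 1/6) ) → 1, i.e., M_{n,n/2} ∼ (√2 · 3^(1/6) · Γ(2/3) / √π) · n^(3n/2 − 1/6) along even n. -/

import Mathlib

/-- A rooted labelled tree on the vertex set `Fin n`, encoded by its root and its parent
map: the root is its own parent and every vertex reaches the root by iterating the parent
map (this data is equivalent to a tree on `{1,…,n}` with a distinguished root). -/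
structure LabelledRootedTree (n : ℕ) where
  root : Fin n
  parent : Fin n → Fin n
  parent_root : parent root = root
  reaches_root : ∀ v : Fin n, ∃ k : ℕ, parent^[k] v = root

/-- The parking procedure driven by a step map `f` on `Fin n` (the parent map of a tree, or
an `n`-mapping).  `occ` is the list of occupied vertices; the drivers in the list arrive in
order, and the driver starting at `v` parks at `f^[i] v` for the least `i` such that
`f^[i] v` is unoccupied (searching `i < n` suffices, since the forward orbit of `v` has at
most `n` distinct vertices, all appearing among the first `n` iterates, in visit order).
The result is `none` if some driver finds every vertex on its route occupied. -/
def parkAux (n : ℕ) (f : Fin n → Fin n) : List (Fin n) → List (Fin n) → Option (List (Fin n))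
  | occ, [] => some occ
  | occ, v :: rest =>
    match (List.range n).find? (fun i => decide (f^[i] v ∉ occ)) with
    | none => none
    | some i => parkAux n f (f^[i] v :: occ) rest

/-- `s : Fin m → Fin n` is a parking function for the step map `f` on `Fin n`:
all `m` drivers, arriving in order with preferences `s 1, …, s m`, park successfully. -/
def ParkingSucceeds {n m : ℕ} (f : Fin n → Fin n) (s : Fin m → Fin n) : Prop :=
  (parkAux n f [] (List.ofFn s)).isSome

/-- `s` is a tree parking function for the rooted labelled tree `T`: each driver `k` starts
at `s k` and drives towards the root, parking at the first unoccupied vertex. -/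
def IsTreeParking {n m : ℕ} (T : LabelledRootedTree n) (s : Fin m → Fin n) : Prop :=
  ParkingSucceeds T.parent s

/-- `M_{n,m}`: the number of pairs `(f, s)` with `f` an `n`-mapping and
`s ∈ {1,…,n}^m` a mapping parking function for `f`. -/
noncomputable def MCount (n m : ℕ) : ℕ :=
  Nat.card {p : (Fin n → Fin n) × (Fin m → Fin n) // ParkingSucceeds p.1 p.2}

/-- `F_{n,m}`: the number of pairs `(T, s)` with `T` a rooted labelled tree on `{1,…,n}`
and `s ∈ {1,…,n}^m` a tree parking function for `T`. -/
noncomputable def FCount (n m : ℕ) : ℕ :=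
  Nat.card {p : LabelledRootedTree n × (Fin m → Fin n) // IsTreeParking p.1 p.2}

open Filter

namespace LP
open PowerSeries

/-- coefficients of the series `B` with `B = z e^{2B}`. -/
noncomputable def bc : ℕ → ℝ
  | 0 => 0
  | 1 => 1
  | n + 2 => ((n : ℝ) + 2) / ((n : ℝ) + 1) * ∑ i : Fin (n + 1), bc (i + 1) * bc (n + 1 - i)
  decreasing_by all_goals omega

noncomputable def B : PowerSeries ℝ := PowerSeries.mk bc

noncomputable def tc (n : ℕ) : ℝ := bc n / n

noncomputable def A : PowerSeries ℝ := PowerSeries.mk tc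

noncomputable def M : PowerSeries ℝ := (1 - B)⁻¹

lemma bc0 : bc 0 = 0 := by rw [bc]
lemma bc1 : bc 1 = 1 := by rw [bc]
lemma tc0 : tc 0 = 0 := by simp [tc]
lemma tc1 : tc 1 = 1 := by simp [tc, bc1]

lemma conv_bc (n : ℕ) : ∑ p ∈ Finset.HasAntidiagonal.antidiagonal n, bc p.1 * bc p.2 = ((n : ℝ) - 1) * tc n := by
  match n with
  | 0 => simp [bc0, tc0]
  | 1 => simp [Finset.Nat.antidiagonal_succ, bc0]
  | n + 2 =>
    rw [Finset.Nat.sum_antidiagonal_eq_sum_range_succ (fun i j => bc i * bc j),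
      Finset.sum_range_succ, Finset.sum_range_succ']
    simp only [bc0, Nat.sub_self, mul_zero, zero_mul, add_zero]
    rw [tc, bc, Finset.sum_range]
    push_cast
    have h1 : (n : ℝ) + 1 ≠ 0 := by positivity
    have h2 : (n : ℝ) + 2 ≠ 0 := by positivity
    have : ∀ i : Fin (n + 1), n + 2 - (↑i + 1) = n + 1 - (i : ℕ) := by intro i; omega
    field_simp
    ring

lemma bc_eq (n : ℕ) : bc n = n * tc n := by
  rcases Nat.eq_zero_or_pos n with h | h
  · subst h; simp [bc0]
  · have : (n : ℝ) ≠ 0 := by positivity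
    rw [tc]; field_simp

lemma B_sq : B ^ 2 = B - A := by
  ext n
  rw [pow_two, coeff_mul, map_sub]
  simp only [B, A, coeff_mk]
  rw [conv_bc, bc_eq]; ring

lemma A_eq : A = B * (1 - B) := by
  have := B_sq
  linear_combination this

lemma constB : constantCoeff B = 0 := by simp [B, bc0, ← coeff_zero_eq_constantCoeff_apply]

lemma M_mul : M * (1 - B) = 1 := by
  rw [M, PowerSeries.inv_mul_cancel]
  simp [constB]

lemma M_A_pow (d : ℕ) : M * A ^ (d + 1) = B ^ (d + 1) * (1 - B) ^ d := by
  rw [A_eq, mul_pow, pow_succ (1 - B) d]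
  linear_combination (B ^ (d+1) * (1 - B) ^ d) * M_mul

lemma coeff_X_mul_der (f : PowerSeries ℝ) (n : ℕ) :
    coeff n (X * d⁄dX ℝ f) = n * coeff n f := by
  cases n with
  | zero => simp
  | succ n => rw [coeff_succ_X_mul, coeff_derivative]; push_cast; ring

lemma theta_B : X * d⁄dX ℝ B = B + 2 * B * (X * d⁄dX ℝ B) := by
  have h : X * d⁄dX ℝ (B ^ 2) = X * d⁄dX ℝ B - B := by
    ext n
    rw [coeff_X_mul_der, B_sq, map_sub, map_sub, coeff_X_mul_der]
    simp only [B, A, coeff_mk]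
    rw [bc_eq n]; ring
  rw [derivative_pow] at h
  simp only [Nat.cast_ofNat, Nat.add_one_sub_one, pow_one] at h
  linear_combination -h

lemma beta_rec (k n : ℕ) :
    ((n : ℝ) - (k + 1)) * (k + 2) * coeff n (B ^ (k + 1)) = 2 * (k + 1) * n * coeff n (B ^ (k + 2)) := by
  have h : ((k : PowerSeries ℝ) + 2) * (X * d⁄dX ℝ (B ^ (k + 1))) =
      ((k : PowerSeries ℝ) + 2) * ((k : PowerSeries ℝ) + 1) * B ^ (k + 1) + 2 * ((k : PowerSeries ℝ) + 1) * (X * d⁄dX ℝ (B ^ (k + 2))) := by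
    rw [derivative_pow, derivative_pow]
    push_cast
    linear_combination ((k : PowerSeries ℝ) + 2) * (k + 1) * B ^ k * theta_B
  have h2 := congrArg (coeff n) h
  have e1 : ((k : PowerSeries ℝ) + 2) = C ((k : ℝ) + 2) := by rw [map_add, map_natCast, map_ofNat C 2]
  have e2 : ((k : PowerSeries ℝ) + 1) = C ((k : ℝ) + 1) := by simp [map_add]
  have e3 : (2 : PowerSeries ℝ) = C (2 : ℝ) := (map_ofNat C 2).symm
  rw [e1, e2, e3, (coeff n).map_add, mul_assoc, mul_assoc] at h2
  rw [coeff_C_mul, coeff_C_mul, coeff_C_mul, coeff_C_mul, coeff_C_mul, coeff_X_mul_der, coeff_X_mul_der] at h2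
  linear_combination h2

lemma B_eq_X_mul : ∃ U : PowerSeries ℝ, B = X * U ∧ constantCoeff U = 1 := by
  refine ⟨PowerSeries.mk (fun n => bc (n + 1)), ?_, ?_⟩
  · ext n
    cases n with
    | zero => simp [constB]
    | succ n => rw [coeff_succ_X_mul]; simp [B]
  · simp [← coeff_zero_eq_constantCoeff_apply, bc1]

lemma coeff_B_pow_self (n : ℕ) : coeff n (B ^ n) = 1 := by
  obtain ⟨U, h, h1⟩ := B_eq_X_mul
  rw [h, mul_pow]
  have := coeff_X_pow_mul (U ^ n) n 0
  simp only [zero_add] at this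
  rw [this]; simp [h1]

lemma coeff_B_pow_lt {n k : ℕ} (hk : n < k) : coeff n (B ^ k) = 0 := by
  obtain ⟨U, h, h1⟩ := B_eq_X_mul
  rw [h, mul_pow, coeff_X_pow_mul', if_neg (by omega)]

lemma coeff_B_pow (k j : ℕ) (hk : 0 < k) :
    coeff (k + j) (B ^ k) = (k : ℝ) / (k + j) * (2 * (k + j)) ^ j / j.factorial := by
  induction j generalizing k with
  | zero =>
    have : (k : ℝ) ≠ 0 := by positivity
    simp [coeff_B_pow_self, this]
  | succ j ih =>
    obtain ⟨k, rfl⟩ : ∃ k', k = k' + 1 := ⟨k - 1, by omega⟩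
    have h := beta_rec k (k + 1 + (j + 1))
    have i := ih (k + 2) (by omega)
    rw [show k + 2 + j = k + 1 + (j + 1) by omega] at i
    rw [i] at h
    have h0 : ((j : ℝ) + 1) * (k + 2) ≠ 0 := by positivity
    have h3 : (k : ℝ) + 1 + (j + 1) ≠ 0 := by positivity
    have h4 : (k : ℝ) + 2 + j ≠ 0 := by positivity
    apply mul_left_cancel₀ h0
    rw [Nat.factorial_succ]
    push_cast at h ⊢
    have : (2 * ((k : ℝ) + 2 + j)) = 2 * (k + 1 + (j + 1)) := by ring
    rw [this] at h
    have hj : (j.factorial : ℝ) ≠ 0 := by positivity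
    have e : ((j : ℝ) + 1) * (k + 2) * coeff (k + 1 + (j + 1)) (B ^ (k + 1)) =
      ((k : ℝ) + 1 + (j + 1) - (k + 1)) * (k + 2) * coeff (k + 1 + (j + 1)) (B ^ (k + 1)) := by ring
    rw [e, h, pow_succ]
    have h5 : (k : ℝ) + 2 + j = k + 1 + (j + 1) := by ring
    rw [h5]
    field_simp

/-- exponential series -/
noncomputable def Ex (x : ℝ) : PowerSeries ℝ := PowerSeries.mk (fun n => x ^ n / n.factorial)

lemma der_Ex (x : ℝ) : d⁄dX ℝ (Ex x) = C x * Ex x := by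
  ext n
  rw [coeff_derivative, coeff_C_mul]
  simp only [Ex, coeff_mk, Nat.factorial_succ]
  push_cast
  field_simp
  ring

lemma lagrange_mono (n k : ℕ) (hn : 0 < n) :
    coeff n (B ^ k) = coeff n (X ^ k * ((1 - C 2 * X) * Ex (2 * n))) := by
  have key : ∀ j, coeff j ((1 - C (2:ℝ) * X) * Ex (2 * n)) =
      (2 * (n:ℝ)) ^ j / j.factorial * (1 - j / n) := by
    intro j
    have hn' : (n : ℝ) ≠ 0 := by positivity
    rw [sub_mul, one_mul, map_sub, mul_assoc, coeff_C_mul]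
    cases j with
    | zero => simp [Ex]
    | succ j =>
      rw [coeff_succ_X_mul]
      simp only [Ex, coeff_mk, Nat.factorial_succ]
      push_cast
      field_simp
      ring
  rw [coeff_X_pow_mul']
  split_ifs with h
  · obtain ⟨j, rfl⟩ := Nat.exists_eq_add_of_le h
    rw [show k + j - k = j by omega, key]
    rcases Nat.eq_zero_or_pos k with h0 | h0
    · subst h0
      have : (j : ℝ) ≠ 0 := by
        have : 0 < j := by omega
        positivity
      have hj : j ≠ 0 := by omega
      simp [this, hj, coeff_one]
    · rw [coeff_B_pow k j h0]
      have : (k : ℝ) + j ≠ 0 := by positivity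
      push_cast
      field_simp
      ring
  · exact coeff_B_pow_lt (by omega)

lemma lagrange_poly (n : ℕ) (hn : 0 < n) (G : Polynomial ℝ) :
    coeff n (Polynomial.aeval B G) = coeff n ((G : PowerSeries ℝ) * ((1 - C 2 * X) * Ex (2 * n))) := by
  induction G using Polynomial.induction_on' with
  | add p q hp hq => simp only [map_add, Polynomial.coe_add, add_mul, hp, hq]
  | monomial k a =>
    rw [Polynomial.aeval_monomial, ← Polynomial.C_mul_X_pow_eq_monomial, Polynomial.coe_mul,
      Polynomial.coe_C, Polynomial.coe_pow, Polynomial.coe_X, mul_assoc]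
    have : algebraMap ℝ (PowerSeries ℝ) a = C a := rfl
    rw [this, coeff_C_mul, coeff_C_mul, lagrange_mono n k hn]

lemma coeff_MA (n d : ℕ) (hd : d + 1 ≤ n) :
    coeff n (M * A ^ (d + 1)) =
      coeff (n - (d + 1)) ((1 - X) ^ d * ((1 - C 2 * X) * Ex (2 * n))) := by
  have h := lagrange_poly n (by omega) (Polynomial.X ^ (d + 1) * (1 - Polynomial.X) ^ d)
  simp only [map_mul, map_pow, Polynomial.aeval_X, map_sub, map_one] at h
  rw [M_A_pow, h]
  simp only [Polynomial.coe_mul, Polynomial.coe_pow, Polynomial.coe_X, Polynomial.coe_sub,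
    Polynomial.coe_one]
  rw [mul_assoc, coeff_X_pow_mul', if_pos hd]

/-- The saddle point identity. -/
lemma saddle (k : ℕ) (hk : 0 < k) :
    (k : ℝ) * coeff k ((1 - X) ^ (k - 1) * ((1 - C 2 * X) * Ex (4 * k))) =
      coeff k ((1 - X) ^ k * (Ex (4 * k) * (C 2 * X * ((1 - C 2 * X)⁻¹) ^ 2))) := by
  obtain ⟨j, rfl⟩ : ∃ j, k = j + 1 := ⟨k - 1, by omega⟩
  set k := j + 1 with hkj
  have hinv : (1 - C (2:ℝ) * X)⁻¹ * (1 - C 2 * X) = 1 := by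
    rw [PowerSeries.inv_mul_cancel]; simp
  set R := (1 - C (2:ℝ) * X)⁻¹ with hR
  have hdR : d⁄dX ℝ R = C 2 * R ^ 2 := by
    rw [hR, derivative_inv']
    simp [Derivation.leibniz]
    ring
  have hd1 : d⁄dX ℝ ((1 - X : PowerSeries ℝ) ^ k) = - (C (k:ℝ)) * (1 - X) ^ j := by
    rw [derivative_pow, map_sub, derivative_X, derivative_one]
    simp [hkj]
    ring
  have h := coeff_X_mul_der ((1 - X) ^ k * (Ex (4 * k) * R)) k
  rw [Derivation.leibniz, Derivation.leibniz, der_Ex, hdR, hd1] at h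
  simp only [smul_eq_mul] at h
  rw [← coeff_C_mul] at h
  rw [← coeff_C_mul]
  have h2 : coeff k (C (k:ℝ) * ((1 - X) ^ k * (Ex (4 * (k:ℝ)) * R)) - X *
          ((1 - X) ^ k * (Ex (4 * (k:ℝ)) * (C 2 * R ^ 2) + R * (C (4 * (k:ℝ)) * Ex (4 * (k:ℝ)))) +
            Ex (4 * (k:ℝ)) * R * (-C (k:ℝ) * (1 - X) ^ j))) = 0 := by
    rw [map_sub, h, sub_self]
  have h3 : (C (k:ℝ) * ((1 - X) ^ (k - 1) * ((1 - C 2 * X) * Ex (4 * (k:ℝ))))) -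
      ((1 - X) ^ k * (Ex (4 * (k:ℝ)) * (C 2 * X * R ^ 2))) =
      (C (k:ℝ) * ((1 - X) ^ k * (Ex (4 * (k:ℝ)) * R)) - X *
          ((1 - X) ^ k * (Ex (4 * (k:ℝ)) * (C 2 * R ^ 2) + R * (C (4 * (k:ℝ)) * Ex (4 * (k:ℝ)))) +
            Ex (4 * (k:ℝ)) * R * (-C (k:ℝ) * (1 - X) ^ j))) := by
    rw [show k - 1 = j by omega, hkj, pow_succ]
    have : (C (4 * ((j + 1 : ℕ):ℝ)) : PowerSeries ℝ) = 4 * C ((j + 1 : ℕ):ℝ) := by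
      rw [map_mul, map_ofNat C 4]
    rw [this]
    have h22 : (C (2:ℝ) : PowerSeries ℝ) = 2 := map_ofNat _ 2
    rw [h22] at hinv ⊢
    linear_combination (-(1 - 2 * X) * C ((j + 1 : ℕ):ℝ) * (1 - X) ^ j * Ex (4 * ((j+1 : ℕ):ℝ))) * hinv
  rw [← sub_eq_zero, ← map_sub, h3, h2]

lemma coeff_aux (x : ℝ) (i : ℕ) :
    coeff i (Ex (2 * x) * (C 2 * X * ((1 - C (2:ℝ) * X)⁻¹) ^ 2)) =
      2 ^ i * ∑ q ∈ Finset.range (i+1), ((i : ℝ) - q) * x ^ q / q.factorial := by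
  have hinv : (1 - C (2:ℝ) * X)⁻¹ * (1 - C 2 * X) = 1 := by
    rw [PowerSeries.inv_mul_cancel]; simp
  have hR : (C (2:ℝ) * X * ((1 - C (2:ℝ) * X)⁻¹) ^ 2) = PowerSeries.mk (fun n => (n : ℝ) * 2 ^ n) := by
    have h : (PowerSeries.mk (fun n => (n : ℝ) * 2 ^ n)) * (1 - C (2:ℝ) * X) ^ 2 = C 2 * X := by
      have e : (PowerSeries.mk (fun n => (n : ℝ) * 2 ^ n)) * (1 - C (2:ℝ) * X) ^ 2 =
        PowerSeries.mk (fun n => (n : ℝ) * 2 ^ n) - C 4 * (X * PowerSeries.mk (fun n => (n : ℝ) * 2 ^ n))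
        + C 4 * (X * (X * PowerSeries.mk (fun n => (n : ℝ) * 2 ^ n))) := by
          have h22 : (C (2:ℝ) : PowerSeries ℝ) = 2 := map_ofNat _ 2
          have h24 : (C (4:ℝ) : PowerSeries ℝ) = 4 := map_ofNat _ 4
          rw [h22, h24]; ring
      rw [e]
      ext n
      rw [map_add, map_sub, coeff_C_mul, coeff_C_mul, coeff_C_mul]
      match n with
      | 0 => simp
      | 1 => 
        rw [coeff_succ_X_mul, coeff_succ_X_mul, show (X : PowerSeries ℝ) = X * 1 by simp, coeff_succ_X_mul]
        simp             
      | n + 2 =>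
        rw [coeff_succ_X_mul, coeff_succ_X_mul, coeff_succ_X_mul]
        rw [show (X : PowerSeries ℝ) = X * 1 by simp, coeff_succ_X_mul]
        simp [coeff_one]
        ring
    have := congrArg (fun f => f * ((1 - C (2:ℝ) * X)⁻¹) ^ 2) h
    rw [mul_assoc, ← mul_pow, mul_comm (1 - C (2:ℝ) * X), hinv] at this
    rw [← this]; simp
  rw [hR, coeff_mul, Finset.Nat.sum_antidiagonal_eq_sum_range_succ
    (fun a b => coeff a (Ex (2*x)) * coeff b (PowerSeries.mk (fun n => (n : ℝ) * 2 ^ n))), Finset.mul_sum]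
  apply Finset.sum_congr rfl
  intro q hq
  have hq' : q ≤ i := by simpa [Nat.lt_succ_iff] using hq
  simp only [Ex, coeff_mk]
  rw [Nat.cast_sub hq', mul_pow]
  have : (2:ℝ) ^ i = 2 ^ q * 2 ^ (i - q) := by rw [← pow_add]; congr 1; omega
  rw [this]; ring

noncomputable def pk (k : ℕ) : ℝ := ∑ i ∈ Finset.range (k + 1), (k.choose i : ℝ) * (-1) ^ (k - i) * 2 ^ i *
    ∑ q ∈ Finset.range (i+1), ((i : ℝ) - q) * (2 * (k:ℝ)) ^ q / q.factorial

lemma coeff_MA_eq_pk (k : ℕ) (hk : 0 < k) :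
    (k : ℝ) * coeff (2 * k) (M * A ^ k) = pk k := by
  obtain ⟨j, rfl⟩ : ∃ j, k = j + 1 := ⟨k - 1, by omega⟩
  have h1 := coeff_MA (2 * (j + 1)) j (by omega)
  have h2 := saddle (j + 1) hk
  rw [h1, show 2 * (j + 1) - (j + 1) = j + 1 by omega]
  rw [Nat.add_sub_cancel] at h2
  have : (2 * ((2 * (j + 1) : ℕ) : ℝ)) = 4 * ((j + 1 : ℕ) : ℝ) := by push_cast; ring
  rw [this, h2]
  set k := j + 1
  rw [coeff_mul, pk]
  have e : (4 * (k:ℝ)) = 2 * (2 * k) := by ring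
  rw [e]
  rw [← Finset.Nat.sum_antidiagonal_swap]
  simp only [Prod.fst_swap, Prod.snd_swap]
  rw [Finset.Nat.sum_antidiagonal_eq_sum_range_succ
    (fun a b => coeff b ((1 - X : PowerSeries ℝ)^k) * coeff a (Ex (2 * (2 * (k:ℝ))) * (C 2 * X * ((1 - C (2:ℝ) * X)⁻¹) ^ 2)))]
  apply Finset.sum_congr rfl
  intro i hi
  have hi' : i ≤ k := by simpa [Nat.lt_succ_iff] using hi
  rw [coeff_aux]
  have : coeff (k - i) ((1 - X : PowerSeries ℝ) ^ k) = (k.choose i : ℝ) * (-1) ^ (k - i) := by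
    have h : (1 - X : PowerSeries ℝ) ^ k = (((1 - Polynomial.X) ^ k : Polynomial ℝ) : PowerSeries ℝ) := by
      simp
    rw [h, Polynomial.coeff_coe]
    have h' : (1 - Polynomial.X : Polynomial ℝ) = -Polynomial.X + 1 := by ring
    rw [h', add_pow]
    simp only [Polynomial.finsetSum_coeff, one_pow, mul_one, neg_pow (Polynomial.X : Polynomial ℝ)]
    rw [Finset.sum_eq_single (k - i)]
    · rw [show ((-1 : Polynomial ℝ)^(k-i)) = Polynomial.C ((-1)^(k-i)) by simp, mul_assoc, Polynomial.coeff_C_mul, ← Polynomial.C_eq_natCast,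
        Polynomial.coeff_mul_C, Polynomial.coeff_X_pow, Nat.choose_symm hi']
      simp; ring
    · intro b hb hne
      rw [show ((-1 : Polynomial ℝ)^b) = Polynomial.C ((-1)^b) by simp, mul_assoc, Polynomial.coeff_C_mul, ← Polynomial.C_eq_natCast,
        Polynomial.coeff_mul_C, Polynomial.coeff_X_pow, if_neg (fun h => hne h.symm)]
      simp
    · intro h; exfalso; apply h; simp
  rw [this]; ring
end LP

namespace LP
open PowerSeries

/-- iterated weighted sum over lists (multisets) of sizes -/
noncomputable def J (n : ℕ) : ℕ → (Multiset ℕ → ℝ) → ℝ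
  | 0, φ => φ 0
  | d + 1, φ => ∑ x ∈ Finset.range (n + 1), tc x * J n d (fun s => φ (x ::ₘ s))

lemma J_add (n d : ℕ) (φ ψ : Multiset ℕ → ℝ) :
    J n d (fun s => φ s + ψ s) = J n d φ + J n d ψ := by
  induction d generalizing φ ψ with
  | zero => rfl
  | succ d ih => simp only [J, ih, mul_add, Finset.sum_add_distrib]

lemma J_mul (n d : ℕ) (c : ℝ) (φ : Multiset ℕ → ℝ) :
    J n d (fun s => c * φ s) = c * J n d φ := by
  induction d generalizing φ with
  | zero => rfl
  | succ d ih =>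
    simp only [J, ih, Finset.mul_sum]
    exact Finset.sum_congr rfl (fun _ _ => by ring)

lemma J_congr (n d : ℕ) (φ ψ : Multiset ℕ → ℝ) (h : ∀ s, s.card = d → (∀ x ∈ s, 0 < x) → φ s = ψ s) :
    J n d φ = J n d ψ := by
  induction d generalizing φ ψ with
  | zero => exact h 0 rfl (by simp)
  | succ d ih =>
    simp only [J]
    refine Finset.sum_congr rfl (fun x _ => ?_)
    rcases Nat.eq_zero_or_pos x with hx | hx
    · subst hx; simp [tc0]
    · congr 1
      apply ih
      intro s hs h0
      apply h
      · simp [hs]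
      · intro y hy
        rcases Multiset.mem_cons.1 hy with h1 | h1
        · omega
        · exact h0 _ h1

lemma J_zero (n d : ℕ) : J n d (fun _ => 0) = 0 := by
  have := J_mul n d 0 (fun _ => 0)
  simpa using this

lemma J_sum (n d : ℕ) {ι : Type*} (I : Finset ι) (φ : ι → Multiset ℕ → ℝ) :
    J n d (fun s => ∑ i ∈ I, φ i s) = ∑ i ∈ I, J n d (φ i) := by
  classical
  induction I using Finset.induction_on with
  | empty => simp [J_zero]
  | insert a I ha ih =>
    rw [Finset.sum_insert ha, ← ih, ← J_add]
    congr 1; ext s; rw [Finset.sum_insert ha]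

lemma map_erase_cons (F : ℕ → Multiset ℕ → ℝ) (x : ℕ) (s : Multiset ℕ) :
    ((x ::ₘ s).map (fun y : ℕ => F y ((x ::ₘ s).erase y))).sum =
      F x s + (s.map (fun y : ℕ => F y (x ::ₘ s.erase y))).sum := by
  rw [Multiset.map_cons, Multiset.sum_cons, Multiset.erase_cons_head]
  congr 2
  apply Multiset.map_congr rfl
  intro y hy
  by_cases h : y = x
  · subst h; rw [Multiset.erase_cons_head, Multiset.cons_erase hy]
  · rw [Multiset.erase_cons_tail _ (Ne.symm h)]

lemma J_pick (n d : ℕ) (F : ℕ → Multiset ℕ → ℝ) :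
    J n (d + 1) (fun s => (s.map (fun y : ℕ => F y (s.erase y))).sum) =
      (d + 1) * ∑ x ∈ Finset.range (n + 1), tc x * J n d (F x) := by
  induction d generalizing F with
  | zero => simp [J]
  | succ d ih =>
    rw [J]
    have h1 : ∀ x, J n (d + 1) (fun s => ((x ::ₘ s).map (fun y : ℕ => F y ((x ::ₘ s).erase y))).sum) =
        J n (d + 1) (F x) + (d + 1) * ∑ y ∈ Finset.range (n + 1), tc y * J n d (fun s => F y (x ::ₘ s)) := by
      intro x
      rw [← ih (fun y s => F y (x ::ₘ s)), ← J_add]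
      congr 1; ext s
      exact map_erase_cons F x s
    simp only [h1, mul_add, Finset.sum_add_distrib]
    have h2 : ∑ x ∈ Finset.range (n + 1), tc x * (((d:ℝ) + 1) * ∑ y ∈ Finset.range (n + 1), tc y * J n d (fun s => F y (x ::ₘ s)))
        = (d + 1) * ∑ x ∈ Finset.range (n + 1), tc x * J n (d + 1) (F x) := by
      simp only [J, Finset.mul_sum]
      rw [Finset.sum_comm]
      refine Finset.sum_congr rfl (fun x _ => Finset.sum_congr rfl (fun y _ => by ring))
    rw [h2]
    push_cast; ring

/-- truncated coefficient of M -/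
noncomputable def Mt (n σ : ℕ) : ℝ := if σ ≤ n then coeff (n - σ) M else 0

/-- one step of the chain -/
noncomputable def Lop (n : ℕ) (φ : Multiset ℕ → ℝ) (s : Multiset ℕ) : ℝ :=
  (s.map (fun x : ℕ => (x : ℝ) * (((s.erase x).map (fun y : ℕ => (y : ℝ) * φ ((x + y) ::ₘ (s.erase x).erase y))).sum
    + ((n : ℝ) - (s.erase x).sum) * φ (s.erase x)))).sum

noncomputable def w (n d : ℕ) (φ : Multiset ℕ → ℝ) : ℝ := J n d (fun s => Mt n s.sum * φ s)

lemma Mt_conv (n t : ℕ) :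
    ((n : ℝ) - t) * ∑ x ∈ Finset.range (n + 1), tc x * x * Mt n (x + t) = ((n : ℝ) - t) * Mt n t := by
  by_cases ht : t ≤ n
  · obtain ⟨r, rfl⟩ := Nat.exists_eq_add_of_le ht
    rcases Nat.eq_zero_or_pos r with h0 | h0
    · subst h0; simp
    congr 1
    have h := congrArg (coeff r) M_mul
    rw [mul_sub, mul_one, map_sub, coeff_one, if_neg (by omega), mul_comm M B, coeff_mul,
      Finset.Nat.sum_antidiagonal_eq_sum_range_succ (fun a b => coeff a B * coeff b M)] at h
    rw [Mt, if_pos ht, show t + r - t = r by omega]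
    rw [sub_eq_zero.1 h]
    symm
    apply Finset.sum_subset_zero_on_sdiff
    · intro x; simp; omega
    · intro x hx
      simp at hx
      rw [Mt, if_neg (by omega), mul_zero]
    · intro x hx
      simp at hx
      rw [Mt, if_pos (by omega), show t + r - (x + t) = r - x by omega]
      simp [B, bc_eq]; left; ring
  · have : ∀ x, Mt n (x + t) = 0 := fun x => by rw [Mt, if_neg (by omega)]
    simp only [this]
    rw [Mt, if_neg ht]; simp

lemma conv_sum (n : ℕ) (f : ℕ → ℝ) (hf : ∀ c, n < c → f c = 0) :
    ∑ x ∈ Finset.range (n + 1), ∑ y ∈ Finset.range (n + 1), bc x * bc y * f (x + y) =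
      ∑ c ∈ Finset.range (n + 1), tc c * (((c : ℝ) - 1) * f c) := by
  have h1 : ∀ c ∈ Finset.range (n + 1), tc c * (((c : ℝ) - 1) * f c) =
      ∑ p ∈ Finset.HasAntidiagonal.antidiagonal c, bc p.1 * bc p.2 * f (p.1 + p.2) := by
    intro c _
    have := conv_bc c
    rw [show tc c * (((c : ℝ) - 1) * f c) = ((c : ℝ) - 1) * tc c * f c by ring, ← this, Finset.sum_mul]
    apply Finset.sum_congr rfl
    intro p hp
    rw [Finset.HasAntidiagonal.mem_antidiagonal.1 hp]
  rw [Finset.sum_congr rfl h1, ← Finset.sum_product', Finset.sum_sigma']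
  symm
  refine Finset.sum_bij_ne_zero (fun p _ _ => p.2) ?_ ?_ ?_ ?_
  · rintro ⟨c, a, b⟩ hp _
    simp at hp ⊢; omega
  · rintro ⟨c, a, b⟩ hp _ ⟨c', a', b'⟩ hp' _ h
    simp at hp hp' h ⊢
    omega
  · rintro ⟨a, b⟩ hp hne
    have : a + b ≤ n := by
      by_contra hcon
      exact hne (by simp [hf (a + b) (by omega)])
    exact ⟨⟨a + b, a, b⟩, by simp; omega, hne, rfl⟩
  · intros; rfl

lemma card_sum (s : Multiset ℕ) (g : ℝ) :
    (s.map (fun c : ℕ => ((c : ℝ) - 1) * g)).sum = (((s.sum : ℕ) : ℝ) - (s.card : ℝ)) * g := by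
  induction s using Multiset.induction_on with
  | empty => simp
  | cons a s ih => simp [ih]; ring

lemma w_Lop (n d : ℕ) (φ : Multiset ℕ → ℝ) :
    w n (d + 1) (Lop n φ) = (d + 1) * ((n : ℝ) - d) * w n d φ := by
  have h1 : w n (d + 1) (Lop n φ) = J n (d + 1) (fun s => (s.map (fun x : ℕ =>
      (fun (x : ℕ) (t : Multiset ℕ) => Mt n (x + t.sum) * ((x : ℝ) * ((t.map (fun y : ℕ => (y : ℝ) * φ ((x + y) ::ₘ t.erase y))).sum
    + ((n : ℝ) - (t.sum : ℕ)) * φ t))) x (s.erase x))).sum) := by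
    unfold w Lop
    congr 1; ext s
    rw [← Multiset.sum_map_mul_left]
    congr 1
    apply Multiset.map_congr rfl
    intro x hx
    have : x + (s.erase x).sum = s.sum := by
      rw [← Multiset.sum_cons, Multiset.cons_erase hx]
    simp only [this]
  refine h1.trans ((J_pick n d (fun (x : ℕ) (t : Multiset ℕ) => Mt n (x + t.sum) * ((x : ℝ) * ((t.map (fun y : ℕ => (y : ℝ) * φ ((x + y) ::ₘ t.erase y))).sum
    + ((n : ℝ) - (t.sum : ℕ)) * φ t)))).trans ?_)
  have h2 : ∀ x, J n d (fun t => Mt n (x + t.sum) * ((x : ℝ) * ((t.map (fun y : ℕ => (y : ℝ) * φ ((x + y) ::ₘ t.erase y))).sum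
    + ((n : ℝ) - (t.sum : ℕ)) * φ t))) =
      x * J n d (fun t => (t.map (fun y : ℕ => Mt n (x + t.sum) * ((y : ℝ) * φ ((x + y) ::ₘ t.erase y)))).sum) +
      J n d (fun t => (x * Mt n (x + t.sum)) * (((n : ℝ) - (t.sum : ℕ)) * φ t)) := by
    intro x
    rw [← J_mul, ← J_add]
    congr 1; ext t
    rw [Multiset.sum_map_mul_left]; ring
  rw [Finset.sum_congr rfl (fun x _ => congrArg (fun z => tc x * z) (h2 x))]
  simp only [mul_add (tc _), Finset.sum_add_distrib]
  have h3 : ∑ x ∈ Finset.range (n + 1), tc x * J n d (fun t => (x * Mt n (x + t.sum)) * (((n : ℝ) - (t.sum : ℕ)) * φ t))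
      = J n d (fun t => ((n : ℝ) - (t.sum : ℕ)) * (Mt n t.sum * φ t)) := by
    simp only [← J_mul]
    rw [← J_sum]
    congr 1; ext t
    have := Mt_conv n t.sum
    rw [← mul_assoc, ← this, Finset.mul_sum, Finset.sum_mul]
    apply Finset.sum_congr rfl
    intro x _; ring
  have h4 : ∑ x ∈ Finset.range (n + 1), tc x * (x * J n d (fun t => (t.map (fun y : ℕ => Mt n (x + t.sum) * ((y : ℝ) * φ ((x + y) ::ₘ t.erase y)))).sum))
      = J n d (fun t => ((t.sum : ℕ) - (d : ℝ)) * (Mt n t.sum * φ t)) := by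
    cases d with
    | zero => simp [J]
    | succ e =>
      have a1 : ∀ x, J n (e + 1) (fun t => (t.map (fun y : ℕ => Mt n (x + t.sum) * ((y : ℝ) * φ ((x + y) ::ₘ t.erase y)))).sum) =
          J n (e + 1) (fun t => (t.map (fun y : ℕ => (fun (y : ℕ) (r : Multiset ℕ) => Mt n (x + y + r.sum) * ((y : ℝ) * φ ((x + y) ::ₘ r))) y (t.erase y))).sum) := by
        intro x
        congr 1; ext t
        congr 1
        apply Multiset.map_congr rfl
        intro y hy
        have : y + (t.erase y).sum = t.sum := by
          rw [← Multiset.sum_cons, Multiset.cons_erase hy]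
        simp only [← this, add_assoc]
      have a1' := fun x => (a1 x).trans (J_pick n e (fun (y : ℕ) (r : Multiset ℕ) => Mt n (x + y + r.sum) * ((y : ℝ) * φ ((x + y) ::ₘ r))))
      simp only [a1']
      have a2 : ∀ x y : ℕ, J n e (fun r => Mt n (x + y + r.sum) * ((y : ℝ) * φ ((x + y) ::ₘ r))) =
          y * (fun c => J n e (fun r => Mt n (c + r.sum) * φ (c ::ₘ r))) (x + y) := by
        intro x y
        simp only
        rw [← J_mul]
        congr 1; ext r; ring
      simp only [a2]
      have a3 := conv_sum n (fun c => J n e (fun r => Mt n (c + r.sum) * φ (c ::ₘ r))) (by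
        intro c hc
        have : (fun r : Multiset ℕ => Mt n (c + r.sum) * φ (c ::ₘ r)) = fun _ => 0 := by
          ext r; rw [Mt, if_neg (by omega), zero_mul]
        rw [this, J_zero])
      have a4 := J_pick n e (fun (c : ℕ) (r : Multiset ℕ) => ((c : ℝ) - 1) * (Mt n (c + r.sum) * φ (c ::ₘ r)))
      simp only [J_mul] at a4
      rw [← a3] at a4
      have a5 : J n (e + 1) (fun t => ((t.sum : ℕ) - ((e + 1 : ℕ) : ℝ)) * (Mt n t.sum * φ t)) =
          J n (e + 1) (fun s => (s.map (fun y : ℕ => ((y : ℝ) - 1) * (Mt n (y + (s.erase y).sum) * φ (y ::ₘ s.erase y)))).sum) := by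
        apply J_congr
        intro s hs _
        rw [← hs, ← card_sum]
        congr 1
        apply Multiset.map_congr rfl
        intro y hy
        rw [← Multiset.sum_cons, Multiset.cons_erase hy]
      rw [a5, a4]
      simp only [bc_eq, Finset.mul_sum]
      refine Finset.sum_congr rfl (fun x _ => Finset.sum_congr rfl (fun y _ => by ring))
  rw [h3, h4, ← J_add, mul_assoc]
  unfold w
  congr 1
  rw [← J_mul]
  congr 1; ext t; ring

/-- number of successful continuations -/
noncomputable def W (n : ℕ) : ℕ → Multiset ℕ → ℝ
  | 0 => fun _ => 1
  | r + 1 => Lop n (W n r)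

lemma J_replicate (n : ℕ) (hn : 0 < n) (d : ℕ) (ψ : Multiset ℕ → ℝ)
    (h : ∀ s, s.card = d → (∀ x ∈ s, 0 < x) → s ≠ Multiset.replicate d 1 → ψ s = 0) :
    J n d ψ = ψ (Multiset.replicate d 1) := by
  induction d generalizing ψ with
  | zero => rfl
  | succ d ih =>
    rw [J, Finset.sum_eq_single 1]
    · rw [tc1, one_mul, ih, ← Multiset.replicate_succ]
      intro s hs hp hne
      apply h
      · simp [hs]
      · intro x hx
        rcases Multiset.mem_cons.1 hx with h1 | h1
        · omega
        · exact hp _ h1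
      · rw [Multiset.replicate_succ]
        intro h'
        exact hne ((Multiset.cons_inj_right _).1 h')
    · intro x _ hx
      rcases Nat.eq_zero_or_pos x with h0 | h0
      · subst h0; simp [tc0]
      · rw [J_congr n d _ (fun _ => 0), J_zero, mul_zero]
        intro s hs hp
        apply h
        · simp [hs]
        · intro y hy
          rcases Multiset.mem_cons.1 hy with h1 | h1
          · omega
          · exact hp _ h1
        · intro h'
          have : x ∈ Multiset.replicate (d + 1) 1 := by rw [← h']; simp
          exact hx (Multiset.eq_of_mem_replicate this)
    · intro h'; exfalso; apply h'; simp; omega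

lemma w_top (n : ℕ) (hn : 0 < n) (φ : Multiset ℕ → ℝ) : w n n φ = φ (Multiset.replicate n 1) := by
  rw [w, J_replicate n hn]
  · simp [Mt]
    have := congrArg (coeff 0) M_mul
    simp [constB] at this
    rw [this, one_mul]
  · intro s hs hp hne
    rw [Mt, if_neg, zero_mul]
    intro hle
    apply hne
    have key : ∀ s : Multiset ℕ, (∀ x ∈ s, 0 < x) → s.card ≤ s.sum ∧ (s.sum ≤ s.card → s = Multiset.replicate s.card 1) := by
      intro s
      induction s using Multiset.induction_on with
      | empty => simp
      | cons a s ih =>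
        intro h
        have ha := h a (by simp)
        obtain ⟨i1, i2⟩ := ih (fun x hx => h x (by simp [hx]))
        simp only [Multiset.card_cons, Multiset.sum_cons]
        refine ⟨by omega, fun h' => ?_⟩
        rw [Multiset.replicate_succ, ← i2 (by omega), show a = 1 by omega]
    have := (key s hp).2 (by omega)
    rwa [hs] at this

lemma w_one (n d c : ℕ) (P : PowerSeries ℝ) :
    J n d (fun s => if c + s.sum ≤ n then coeff (n - (c + s.sum)) P else 0) =
      if c ≤ n then coeff (n - c) (P * A ^ d) else 0 := by
  induction d generalizing c with
  | zero => simp [J]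
  | succ d ih =>
    rw [J]
    have : ∀ x, J n d (fun s => if c + (x ::ₘ s).sum ≤ n then coeff (n - (c + (x ::ₘ s).sum)) P else 0) =
        if c + x ≤ n then coeff (n - (c + x)) (P * A ^ d) else 0 := by
      intro x
      rw [← ih (c + x)]
      simp only [Multiset.sum_cons, add_assoc]
    simp only [this]
    split_ifs with hc
    · rw [show P * A ^ (d + 1) = A * (P * A ^ d) by ring, coeff_mul,
        Finset.Nat.sum_antidiagonal_eq_sum_range_succ (fun a b => coeff a A * coeff b (P * A ^ d))]
      symm
      apply Finset.sum_subset_zero_on_sdiff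
      · intro x; simp; omega
      · intro x hx
        simp at hx
        rw [if_neg (by omega), mul_zero]
      · intro x hx
        simp at hx
        rw [if_pos (by omega), show n - (c + x) = n - c - x by omega]
        simp [A]
    · apply Finset.sum_eq_zero
      intro x _
      rw [if_neg (by omega), mul_zero]

lemma w_W (n d r : ℕ) (h : d + r ≤ n) :
    w n (d + r) (W n r) * d.factorial * (n - d - r).factorial = (d + r).factorial * (n - d).factorial * coeff n (M * A ^ d) := by
  induction r with
  | zero =>
    have := w_one n d 0 M
    simp only [zero_add, Nat.zero_le, if_true, Nat.sub_zero] at this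
    simp only [W, w, mul_one, add_zero, Nat.sub_zero, Mt, this]
    ring
  | succ r ih =>
    have := ih (by omega)
    rw [← add_assoc, W, w_Lop]
    obtain ⟨e, he⟩ : ∃ e, n = d + r + 1 + e := ⟨n - (d + r + 1), by omega⟩
    have e1 : n - d - r = e + 1 := by omega
    have e2 : n - d - (r + 1) = e := by omega
    have e3 : (n : ℝ) - ((d + r : ℕ) : ℝ) = e + 1 := by rw [he]; push_cast; ring
    rw [e1, Nat.factorial_succ] at this
    rw [e2, e3, Nat.factorial_succ (d + r)]
    push_cast at this ⊢
    linear_combination ((d : ℝ) + r + 1) * this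

lemma W_final (k : ℕ) (hk : 0 < k) :
    W (2 * k) k (Multiset.replicate (2 * k) 1) = (2 * k).factorial * coeff (2 * k) (M * A ^ k) := by
  have h := w_W (2 * k) k k (by omega)
  rw [show k + k = 2 * k by ring, w_top _ (by omega), show 2 * k - k = k by omega, Nat.sub_self] at h
  have : (k.factorial : ℝ) ≠ 0 := by positivity
  apply mul_right_cancel₀ this
  simp at h
  linear_combination h
end LP

namespace LP
noncomputable section
open scoped Classical


section Aux
variable {n : ℕ}

inductive Rt (f : Fin n → Fin n) (O : Finset (Fin n)) : Fin n → Fin n → Prop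
  | here (v : Fin n) (hv : v ∉ O) : Rt f O v v
  | step (v ρ : Fin n) (hv : v ∈ O) (h : Rt f O (f v) ρ) : Rt f O v ρ

lemma Rt_notMem {f : Fin n → Fin n} {O : Finset (Fin n)} {v ρ : Fin n} (h : Rt f O v ρ) : ρ ∉ O := by
  induction h with
  | here v hv => exact hv
  | step v ρ hv h ih => exact ih

lemma Rt_unique {f : Fin n → Fin n} {O : Finset (Fin n)} {v ρ σ : Fin n} (h : Rt f O v ρ)
    (h' : Rt f O v σ) : ρ = σ := by
  induction h with
  | here v hv =>
    cases h' with
    | here => rfl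
    | step _ _ h1 => exact absurd h1 hv
  | step v ρ hv h ih =>
    cases h' with
    | here _ h1 => exact absurd hv h1
    | step _ _ _ h2 => exact ih h2

lemma Rt_congr {f g : Fin n → Fin n} {O : Finset (Fin n)} (hfg : ∀ x ∈ O, f x = g x) {v ρ : Fin n}
    (h : Rt f O v ρ) : Rt g O v ρ := by
  induction h with
  | here v hv => exact Rt.here v hv
  | step v ρ hv h ih => exact Rt.step v ρ hv (hfg v hv ▸ ih)

lemma Rt_congr_iff {f g : Fin n → Fin n} {O : Finset (Fin n)} (hfg : ∀ x ∈ O, f x = g x) {v ρ : Fin n} :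
    Rt f O v ρ ↔ Rt g O v ρ :=
  ⟨Rt_congr hfg, Rt_congr (fun x hx => (hfg x hx).symm)⟩

lemma Rt_insert (f : Fin n → Fin n) (O : Finset (Fin n)) (ρ : Fin n) (hρ : ρ ∉ O) (x σ : Fin n)
    (hσ : σ ≠ ρ) : Rt f (insert ρ O) x σ ↔ Rt f O x σ ∨ (Rt f O x ρ ∧ Rt f O (f ρ) σ) := by
  have key1 : ∀ x σ, Rt f O x σ → σ ≠ ρ → Rt f (insert ρ O) x σ := by
    intro x σ h hne
    induction h with
    | here v hv => exact Rt.here v (by simp [hne, hv])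
    | step v τ hv h ih => exact Rt.step v τ (by simp [hv]) (ih hne)
  have key2 : ∀ x τ, Rt f O x τ → ∀ σ, Rt f (insert ρ O) τ σ → Rt f (insert ρ O) x σ := by
    intro x τ h
    induction h with
    | here v hv => exact fun σ h => h
    | step v τ hv h ih => exact fun σ h => Rt.step v σ (by simp [hv]) (ih σ h)
  constructor
  · intro h
    induction h with
    | here v hv =>
      left; exact Rt.here v (by simp at hv; tauto)
    | step v τ hv h ih =>
      have ih := ih hσ
      rcases Finset.mem_insert.1 hv with h1 | h1
      · subst h1
        right
        refine ⟨Rt.here v hρ, ?_⟩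
        rcases ih with h2 | h2
        · exact h2
        · exact h2.2
      · rcases ih with h2 | h2
        · left; exact Rt.step v τ h1 h2
        · right; exact ⟨Rt.step v ρ h1 h2.1, h2.2⟩
  · rintro (h | ⟨h1, h2⟩)
    · exact key1 _ _ h hσ
    · exact key2 _ _ h1 _ (Rt.step ρ σ (by simp) (key1 _ _ h2 hσ))

lemma Rt_iter (f : Fin n → Fin n) (O : Finset (Fin n)) (i : ℕ) : ∀ v : Fin n,
    (∀ j < i, f^[j] v ∈ O) → f^[i] v ∉ O → Rt f O v (f^[i] v) := by
  induction i with
  | zero => intro v _ h; exact Rt.here v h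
  | succ i ih =>
    intro v h1 h2
    refine Rt.step v _ (h1 0 (by omega)) ?_
    rw [Function.iterate_succ_apply] at h2 ⊢
    exact ih (f v) (fun j hj => by simpa using h1 (j + 1) (by omega)) h2

lemma Rt_exists_iter {f : Fin n → Fin n} {O : Finset (Fin n)} {v ρ : Fin n} (h : Rt f O v ρ) :
    ∃ i, f^[i] v ∉ O := by
  induction h with
  | here v hv => exact ⟨0, hv⟩
  | step v ρ hv h ih => obtain ⟨i, hi⟩ := ih; exact ⟨i + 1, hi⟩

lemma iter_lt (f : Fin n → Fin n) (O : Finset (Fin n)) (v : Fin n) (h : ∃ i, f^[i] v ∉ O) :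
    ∃ i < n, f^[i] v ∉ O := by
  refine ⟨Nat.find h, ?_, Nat.find_spec h⟩
  by_contra hcon
  push Not at hcon
  obtain ⟨a, b, hab, he⟩ := Fintype.exists_ne_map_eq_of_card_lt (fun j : Fin (n + 1) => f^[j.1] v) (by simp)
  wlog hlt : a < b generalizing a b
  · exact this b a hab.symm he.symm (lt_of_le_of_ne (not_lt.1 hlt) hab.symm)
  have hb : b.1 ≤ Nat.find h := le_trans (by omega) hcon
  have hlt' : a.1 < b.1 := hlt
  have e1 : f^[Nat.find h] v = f^[Nat.find h - b.1 + a.1] v := by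
    rw [Function.iterate_add_apply]
    rw [he, ← Function.iterate_add_apply]
    congr 1
    congr 1
    omega
  exact Nat.find_min h (m := Nat.find h - b.1 + a.1) (by omega) (e1 ▸ Nat.find_spec h)

lemma find_some (f : Fin n → Fin n) (occ : List (Fin n)) (v : Fin n) (i : ℕ)
    (h : (List.range n).find? (fun i => decide (f^[i] v ∉ occ)) = some i) :
    Rt f occ.toFinset v (f^[i] v) := by
  rw [List.find?_range_eq_some] at h
  apply Rt_iter
  · intro j hj
    have := h.2.2 j hj
    simpa using this
  · simpa using h.1

lemma find_none (f : Fin n → Fin n) (occ : List (Fin n)) (v : Fin n)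
    (h : (List.range n).find? (fun i => decide (f^[i] v ∉ occ)) = none) (ρ : Fin n) :
    ¬ Rt f occ.toFinset v ρ := by
  intro hr
  obtain ⟨i, hi, h1⟩ := iter_lt f _ v (Rt_exists_iter hr)
  rw [List.find?_range_eq_none] at h
  have := h i hi
  simp at this h1
  exact h1 this

def Cn (f : Fin n → Fin n) (r : ℕ) (occ : List (Fin n)) : ℝ :=
  ∑ s : Fin r → Fin n, if (parkAux n f occ (List.ofFn s)).isSome then 1 else 0

def comp (f : Fin n → Fin n) (O : Finset (Fin n)) (ρ : Fin n) : ℕ :=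
  (Finset.univ.filter (fun x => Rt f O x ρ)).card

def sizes (f : Fin n → Fin n) (O : Finset (Fin n)) : Multiset ℕ :=
  (Oᶜ).val.map (comp f O)

lemma Cn_zero (f : Fin n → Fin n) (occ : List (Fin n)) : Cn f 0 occ = 1 := by
  simp [Cn, parkAux]

lemma Rt_sum (f : Fin n → Fin n) (O T : Finset (Fin n)) (v τ : Fin n) (h : Rt f O v τ) (hT : τ ∈ T) (g : Fin n → ℝ) :
    ∑ σ ∈ T, (if Rt f O v σ then g σ else 0) = g τ := by
  rw [Finset.sum_eq_single τ]
  · simp [h]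
  · intro b _ hb
    rw [if_neg]
    intro h'; exact hb (Rt_unique h' h)
  · intro h'; exact absurd hT h'

lemma Cn_succ (f : Fin n → Fin n) (r : ℕ) (occ : List (Fin n)) :
    Cn f (r + 1) occ = ∑ ρ ∈ (occ.toFinset)ᶜ, (comp f occ.toFinset ρ : ℝ) * Cn f r (ρ :: occ) := by
  have h1 : Cn f (r + 1) occ = ∑ v, ∑ s : Fin r → Fin n, if (parkAux n f occ (v :: List.ofFn s)).isSome then (1:ℝ) else 0 := by
    unfold Cn
    rw [← (Fin.consEquiv (fun _ => Fin n)).sum_comp, Fintype.sum_prod_type]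
    simp [Fin.consEquiv]
  have h2 : ∀ v, (∑ s : Fin r → Fin n, if (parkAux n f occ (v :: List.ofFn s)).isSome then (1:ℝ) else 0)
      = ∑ ρ ∈ (occ.toFinset)ᶜ, if Rt f occ.toFinset v ρ then Cn f r (ρ :: occ) else 0 := by
    intro v
    cases hf : (List.range n).find? (fun i => decide (f^[i] v ∉ occ)) with
    | none =>
      simp only [parkAux, hf]
      simp [find_none f occ v hf]
    | some i =>
      have := find_some f occ v i hf
      rw [Rt_sum f _ _ v _ this (by simpa using Rt_notMem this)]
      simp only [parkAux, hf]
      rfl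
  rw [h1, Finset.sum_congr rfl (fun v _ => h2 v), Finset.sum_comm]
  apply Finset.sum_congr rfl
  intro ρ _
  rw [← Finset.sum_filter, Finset.sum_const, nsmul_eq_mul, comp]

def agr (f0 : Fin n → Fin n) (O : Finset (Fin n)) : Finset (Fin n → Fin n) :=
  Finset.univ.filter (fun f => ∀ x ∈ O, f x = f0 x)

def Sn (f0 : Fin n → Fin n) (r : ℕ) (occ : List (Fin n)) : ℝ :=
  ∑ f ∈ agr f0 occ.toFinset, Cn f r occ

lemma comp_congr {f g : Fin n → Fin n} {O : Finset (Fin n)} (hfg : ∀ x ∈ O, f x = g x) (ρ : Fin n) :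
    comp f O ρ = comp g O ρ := by
  unfold comp
  congr 1
  ext x; simp [Rt_congr_iff hfg]

lemma agr_card (f0 : Fin n → Fin n) (O : Finset (Fin n)) : (agr f0 O).card = n ^ (Oᶜ).card := by
  have : agr f0 O = Fintype.piFinset (fun x => if x ∈ O then {f0 x} else Finset.univ) := by
    ext f
    simp only [agr, Finset.mem_filter, Finset.mem_univ, true_and, Fintype.mem_piFinset]
    apply forall_congr'
    intro x
    by_cases h : x ∈ O <;> simp [h]
  rw [this, Fintype.card_piFinset]
  rw [← Finset.prod_mul_prod_compl O, Finset.prod_congr rfl (g := fun _ => 1), Finset.prod_congr (s₁ := Oᶜ) rfl (g := fun _ => n)]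
  · simp
  · intro x hx; simp at hx; simp [hx]
  · intro x hx; simp [hx]

lemma Sn_succ (f0 : Fin n → Fin n) (r : ℕ) (occ : List (Fin n)) :
    Sn f0 (r + 1) occ = ∑ ρ ∈ (occ.toFinset)ᶜ, (comp f0 occ.toFinset ρ : ℝ) *
      ∑ u, Sn (Function.update f0 ρ u) r (ρ :: occ) := by
  unfold Sn
  rw [Finset.sum_congr rfl (fun f _ => Cn_succ f r occ), Finset.sum_comm]
  apply Finset.sum_congr rfl
  intro ρ hρ
  have hρ' : ρ ∉ occ.toFinset := by simpa using hρ
  rw [← Finset.sum_fiberwise (agr f0 occ.toFinset) (fun f => f ρ), Finset.mul_sum]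
  apply Finset.sum_congr rfl
  intro u _
  rw [Finset.mul_sum]
  apply Finset.sum_congr
  · ext f
    simp only [agr, Finset.mem_filter, Finset.mem_univ, true_and, List.toFinset_cons, Finset.mem_insert,
      forall_eq_or_imp, Function.update_self]
    rw [and_comm]
    apply and_congr Iff.rfl
    apply forall₂_congr
    intro x hx
    rw [Function.update_of_ne]
    rintro rfl; exact hρ' hx
  · intro f hf
    congr 2
    apply comp_congr
    intro x hx
    simp only [agr, Finset.mem_filter, Finset.mem_univ, true_and, List.toFinset_cons, Finset.mem_insert,
      forall_eq_or_imp, Function.update_self] at hf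
    rw [hf.2 x hx, Function.update_of_ne]
    rintro rfl; exact hρ' hx

lemma comp_insert (f0 : Fin n → Fin n) (O : Finset (Fin n)) (ρ u σ : Fin n) (hρ : ρ ∉ O) (hσ : σ ≠ ρ) :
    comp (Function.update f0 ρ u) (insert ρ O) σ =
      comp f0 O σ + if Rt f0 O u σ then comp f0 O ρ else 0 := by
  have hag : ∀ x ∈ O, Function.update f0 ρ u x = f0 x := by
    intro x hx
    rw [Function.update_of_ne]
    rintro rfl; exact hρ hx
  unfold comp
  simp only [Rt_insert _ O ρ hρ _ σ hσ, Function.update_self, Rt_congr_iff hag]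
  by_cases h : Rt f0 O u σ
  · simp only [h, and_true, if_true]
    rw [Finset.filter_or, Finset.card_union_of_disjoint]
    rw [Finset.disjoint_filter]
    intro x _ h1 h2
    exact hσ (Rt_unique h1 h2)
  · simp [h]

lemma sizes_insert (f0 : Fin n → Fin n) (O : Finset (Fin n)) (ρ u : Fin n) (hρ : ρ ∉ O) :
    sizes (Function.update f0 ρ u) (insert ρ O) =
      ((Oᶜ).erase ρ).val.map (fun σ => comp f0 O σ + if Rt f0 O u σ then comp f0 O ρ else 0) := by
  unfold sizes
  rw [Finset.compl_insert]
  apply Multiset.map_congr rfl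
  intro σ hσ
  have : σ ≠ ρ := by
    have : σ ∈ (Oᶜ).erase ρ := hσ
    simp at this
    exact this.1
  exact comp_insert f0 O ρ u σ hρ this

lemma Lop_sizes (f0 : Fin n → Fin n) (O : Finset (Fin n)) (φ : Multiset ℕ → ℝ) :
    Lop n φ (sizes f0 O) = ∑ ρ ∈ Oᶜ, (comp f0 O ρ : ℝ) *
      ∑ u, φ (sizes (Function.update f0 ρ u) (insert ρ O)) := by
  unfold Lop
  rw [sizes, Multiset.map_map]
  change ∑ ρ ∈ Oᶜ, _ = _
  apply Finset.sum_congr rfl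
  intro ρ hρ
  have hρ' : ρ ∉ O := by simpa using hρ
  simp only [Function.comp]
  congr 1
  rw [← Multiset.map_erase_of_mem _ _ (show ρ ∈ (Oᶜ).val from hρ), ← Finset.erase_val, Multiset.map_map]
  set T := (Oᶜ).erase ρ with hT
  have e1 : (Multiset.map ((fun y : ℕ => (y : ℝ) * φ ((comp f0 O ρ + y) ::ₘ (Multiset.map (comp f0 O) T.val).erase y)) ∘ comp f0 O) T.val).sum
      = ∑ τ ∈ T, (comp f0 O τ : ℝ) * φ ((comp f0 O ρ + comp f0 O τ) ::ₘ (Multiset.map (comp f0 O) (T.erase τ).val)) := by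
    change ∑ τ ∈ T, _ = _
    apply Finset.sum_congr rfl
    intro τ hτ
    simp only [Function.comp]
    rw [← Multiset.map_erase_of_mem _ _ (show τ ∈ T.val from hτ), ← Finset.erase_val]
  rw [e1]
  have e2 : (((Multiset.map (comp f0 O) T.val).sum : ℕ) : ℝ) = ∑ τ ∈ T, (comp f0 O τ : ℝ) := by
    change ((∑ τ ∈ T, comp f0 O τ : ℕ) : ℝ) = _
    push_cast; rfl
  rw [e2]
  have e3 : ∀ τ, ∀ g : ℝ, (comp f0 O τ : ℝ) * g = ∑ u, if Rt f0 O u τ then g else 0 := by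
    intro τ g
    rw [← Finset.sum_filter, Finset.sum_const, nsmul_eq_mul, comp]
  have e4 : ∀ u, φ (sizes (Function.update f0 ρ u) (insert ρ O)) =
     (∑ τ ∈ T, if Rt f0 O u τ then φ ((comp f0 O ρ + comp f0 O τ) ::ₘ (Multiset.map (comp f0 O) (T.erase τ).val)) else 0)
      + (φ (Multiset.map (comp f0 O) T.val) - ∑ τ ∈ T, if Rt f0 O u τ then φ (Multiset.map (comp f0 O) T.val) else 0) := by
    intro u
    rw [sizes_insert _ _ _ _ hρ']
    by_cases h : ∃ τ ∈ T, Rt f0 O u τ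
    · obtain ⟨τ, hτ, hR⟩ := h
      rw [Rt_sum f0 O T u τ hR hτ, Rt_sum f0 O T u τ hR hτ, sub_self, add_zero]
      congr 1
      rw [← Multiset.cons_erase (show τ ∈ T.val from hτ), Multiset.map_cons, if_pos hR, add_comm, ← Finset.erase_val]
      congr 1
      apply Multiset.map_congr rfl
      intro σ hσ
      rw [if_neg, add_zero]
      intro h'
      have := Rt_unique hR h'
      exact Finset.ne_of_mem_erase (show σ ∈ T.erase τ from hσ) this.symm
    · have h' : ∀ τ ∈ T, ¬ Rt f0 O u τ := by
        intro τ hτ hR; exact h ⟨τ, hτ, hR⟩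
      rw [Finset.sum_eq_zero (fun τ hτ => if_neg (h' τ hτ)), Finset.sum_eq_zero (fun τ hτ => if_neg (h' τ hτ)),
        sub_zero, zero_add]
      congr 1
      apply Multiset.map_congr rfl
      intro σ hσ
      rw [if_neg (h' σ hσ), add_zero]
  rw [Finset.sum_congr rfl (fun u _ => e4 u), Finset.sum_add_distrib, Finset.sum_sub_distrib, Finset.sum_comm,
    Finset.sum_comm (s := Finset.univ) (t := T)]
  simp only [← e3]
  rw [← Finset.sum_mul]
  simp
  ring

lemma Sn_eq (r : ℕ) : ∀ (f0 : Fin n → Fin n) (occ : List (Fin n)),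
    (n : ℝ) ^ r * Sn f0 r occ = (n : ℝ) ^ ((occ.toFinset)ᶜ).card * W n r (sizes f0 occ.toFinset) := by
  induction r with
  | zero =>
    intro f0 occ
    simp [Sn, Cn_zero, W, agr_card]
  | succ r ih =>
    intro f0 occ
    rw [Sn_succ, W, Lop_sizes, Finset.mul_sum, Finset.mul_sum]
    apply Finset.sum_congr rfl
    intro ρ hρ
    have hc : ((occ.toFinset)ᶜ).card = ((insert ρ occ.toFinset)ᶜ).card + 1 := by
      rw [Finset.compl_insert, Finset.card_erase_add_one hρ]
    rw [hc]
    have : ∀ u, (n : ℝ) ^ r * Sn (Function.update f0 ρ u) r (ρ :: occ) = (n : ℝ) ^ ((insert ρ occ.toFinset)ᶜ).card *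
      W n r (sizes (Function.update f0 ρ u) (insert ρ occ.toFinset)) := by
      intro u
      have := ih (Function.update f0 ρ u) (ρ :: occ)
      rwa [List.toFinset_cons] at this
    calc _ = (n : ℝ) * (comp f0 occ.toFinset ρ) * ∑ u, (n : ℝ) ^ r * Sn (Function.update f0 ρ u) r (ρ :: occ) := by
          rw [← Finset.mul_sum]; ring
      _ = _ := by
          rw [Finset.sum_congr rfl (fun u _ => this u), ← Finset.mul_sum]; ring

lemma MCount_eq (n m : ℕ) (hn : 0 < n) :
    (n : ℝ) ^ m * (MCount n m : ℝ) = (n : ℝ) ^ n * W n m (Multiset.replicate n 1) := by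
  have h1 : (MCount n m : ℝ) = Sn (n := n) id m [] := by
    unfold MCount Sn Cn
    have : agr (n := n) id [].toFinset = Finset.univ := by simp [agr]
    rw [this, Nat.card_eq_fintype_card, Fintype.card_subtype, Finset.card_filter, Fintype.sum_prod_type]
    push_cast
    refine Finset.sum_congr rfl (fun f _ => Finset.sum_congr rfl (fun s _ => ?_))
    unfold ParkingSucceeds
    congr
  rw [h1, Sn_eq]
  have h2 : sizes (n := n) id [].toFinset = Multiset.replicate n 1 := by
    have : ∀ ρ, comp (n := n) id [].toFinset ρ = 1 := by
      intro ρ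
      unfold comp
      rw [Finset.card_eq_one]
      refine ⟨ρ, ?_⟩
      ext x
      simp only [Finset.mem_filter, Finset.mem_univ, true_and, Finset.mem_singleton]
      constructor
      · intro h; cases h with
        | here => rfl
        | step _ _ h => simp at h
      · rintro rfl; exact Rt.here _ (by simp)
    unfold sizes
    rw [Multiset.map_congr rfl (fun x _ => this x)]
    simp
  rw [h2]
  simp

end Aux
lemma MCount_final (k : ℕ) (hk : 0 < k) :
    (MCount (2 * k) k : ℝ) = (2 * k : ℝ) ^ k * ((2 * k).factorial * (pk k / k)) := by
  have h := MCount_eq (2 * k) k (by omega)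
  rw [W_final k hk] at h
  have h2 := coeff_MA_eq_pk k hk
  have hk' : (k : ℝ) ≠ 0 := by positivity
  rw [← h2, mul_div_cancel_left₀ _ hk']
  have h3 : ((2 * k : ℕ) : ℝ) ^ k ≠ 0 := by positivity
  apply mul_left_cancel₀ h3
  rw [h]
  push_cast
  rw [show 2 * k = k + k by ring, pow_add]; ring
end
end LP

namespace LP
open MeasureTheory Set Filter Topology

lemma expcos_deriv (s : ℝ) (hs : 0 < s) (u : ℝ) :
    HasDerivAt (fun u => -Real.exp (-(s * u)) / s - Real.exp (-(s * u)) * (Real.sin u - s * Real.cos u) / (1 + s ^ 2))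
      (Real.exp (-(s * u)) * (1 - Real.cos u)) u := by
  have h0 : HasDerivAt (fun u : ℝ => Real.exp (-(s * u))) (Real.exp (-(s * u)) * (-(s * 1))) u :=
    (((hasDerivAt_id u).const_mul s).neg).exp
  have h1 := (h0.neg.div_const s).sub
    ((h0.mul ((Real.hasDerivAt_sin u).sub ((Real.hasDerivAt_cos u).const_mul s))).div_const (1 + s ^ 2))
  refine h1.congr_deriv ?_
  have : 1 + s ^ 2 ≠ 0 := by positivity
  simp only [Pi.sub_apply]
  field_simp
  ring

lemma expcos_tendsto (s : ℝ) (hs : 0 < s) :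
    Tendsto (fun u => -Real.exp (-(s * u)) / s - Real.exp (-(s * u)) * (Real.sin u - s * Real.cos u) / (1 + s ^ 2)) atTop (𝓝 0) := by
  have h0 : Tendsto (fun u : ℝ => Real.exp (-(s * u))) atTop (𝓝 0) :=
    Real.tendsto_exp_neg_atTop_nhds_zero.comp (tendsto_id.const_mul_atTop hs)
  have h1 : Tendsto (fun u : ℝ => Real.exp (-(s * u)) * (Real.sin u - s * Real.cos u)) atTop (𝓝 0) := by
    apply h0.zero_mul_isBoundedUnder_le
    refine isBoundedUnder_of ⟨1 + s, fun u => ?_⟩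
    simp only [Function.comp, Real.norm_eq_abs]
    have a1 := Real.abs_sin_le_one u
    have a2 := Real.abs_cos_le_one u
    calc |Real.sin u - s * Real.cos u| ≤ |Real.sin u| + |s * Real.cos u| := abs_sub _ _
      _ ≤ 1 + s := by rw [abs_mul, abs_of_pos hs]; nlinarith
  have := (h0.neg.div_const s).sub (h1.div_const (1 + s ^ 2))
  simpa using this

lemma expcos_int (s : ℝ) (hs : 0 < s) :
    IntegrableOn (fun u => Real.exp (-(s * u)) * (1 - Real.cos u)) (Ioi 0) ∧
    ∫ u in Ioi (0:ℝ), Real.exp (-(s * u)) * (1 - Real.cos u) = 1 / (s * (1 + s ^ 2)) := by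
  have hn : ∀ x ∈ Ioi (0:ℝ), 0 ≤ Real.exp (-(s * x)) * (1 - Real.cos x) := fun x _ =>
    mul_nonneg (Real.exp_pos _).le (by linarith [Real.cos_le_one x])
  refine ⟨integrableOn_Ioi_deriv_of_nonneg' (fun x _ => expcos_deriv s hs x) hn (expcos_tendsto s hs), ?_⟩
  rw [integral_Ioi_of_hasDerivAt_of_nonneg' (fun x _ => expcos_deriv s hs x) hn (expcos_tendsto s hs)]
  have : 1 + s ^ 2 ≠ 0 := by positivity
  simp
  field_simp
  ring

lemma cosA (a : ℝ) (ha : 0 < a) (hI : IntegrableOn (fun s : ℝ => s ^ (a - 2) * (1 + s ^ 2)⁻¹) (Ioi 0)) :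
    IntegrableOn (fun u : ℝ => (1 - Real.cos u) * u ^ (-a)) (Ioi 0) ∧
    ∫ u in Ioi (0:ℝ), (1 - Real.cos u) * u ^ (-a) = (Real.Gamma a)⁻¹ * ∫ s in Ioi (0:ℝ), s ^ (a - 2) * (1 + s ^ 2)⁻¹ := by
  set μ : Measure ℝ := volume.restrict (Ioi 0) with hμ
  let H : ℝ → ℝ → ℝ := fun s u => s ^ (a - 1) * (Real.exp (-(s * u)) * (1 - Real.cos u))
  have hHn : ∀ s, 0 < s → ∀ u, 0 ≤ H s u := fun s hs u =>
    mul_nonneg (Real.rpow_nonneg hs.le _) (mul_nonneg (Real.exp_pos _).le (by linarith [Real.cos_le_one u]))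
  have hs : ∀ᵐ s ∂μ, 0 < s := ae_restrict_mem measurableSet_Ioi
  have hin : ∀ s, 0 < s → ∫ u, H s u ∂μ = s ^ (a - 2) * (1 + s ^ 2)⁻¹ := by
    intro s hs
    simp only [H]
    rw [integral_const_mul, hμ, (expcos_int s hs).2, show a - 1 = (a - 2) + 1 by ring, Real.rpow_add_one hs.ne']
    have : 1 + s ^ 2 ≠ 0 := by positivity
    field_simp
  have hm : Measurable (Function.uncurry H) := by
    unfold Function.uncurry H
    fun_prop
  have hint : Integrable (Function.uncurry H) (μ.prod μ) := by
    rw [integrable_prod_iff hm.aestronglyMeasurable]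
    constructor
    · filter_upwards [hs] with s hs
      exact ((expcos_int s hs).1).const_mul (s ^ (a - 1))
    · refine Integrable.congr hI ?_
      filter_upwards [hs] with s hs
      rw [← hin s hs]
      apply integral_congr_ae
      filter_upwards with u
      simp [Function.uncurry, abs_of_nonneg (hHn s hs u)]
  have hg : 0 < Real.Gamma a := Real.Gamma_pos_of_pos ha
  have hout : ∀ u, 0 < u → ∫ s, H s u ∂μ = Real.Gamma a * ((1 - Real.cos u) * u ^ (-a)) := by
    intro u hu
    have := Real.integral_rpow_mul_exp_neg_mul_Ioi ha hu
    have e : ∀ s, H s u = (1 - Real.cos u) * (s ^ (a - 1) * Real.exp (-(u * s))) := fun s => by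
      simp only [H]; rw [mul_comm u s]; ring
    simp only [e]
    rw [integral_const_mul, hμ, this, one_div, Real.inv_rpow hu.le, ← Real.rpow_neg hu.le]
    ring
  have hsw := integral_integral_swap hint
  have hr := hint.integral_prod_right
  constructor
  · refine (hr.const_mul (Real.Gamma a)⁻¹).congr ?_
    filter_upwards [hs] with u hu
    have := hout u hu
    simp only [Function.uncurry]
    rw [this]; field_simp
  · have e1 : ∫ s, ∫ u, H s u ∂μ ∂μ = ∫ s, s ^ (a - 2) * (1 + s ^ 2)⁻¹ ∂μ :=
      integral_congr_ae (by filter_upwards [hs] with s hs using hin s hs)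
    have e2 : ∫ u, ∫ s, H s u ∂μ ∂μ = ∫ u, Real.Gamma a * ((1 - Real.cos u) * u ^ (-a)) ∂μ :=
      integral_congr_ae (by filter_upwards [hs] with u hu using hout u hu)
    rw [e1, e2, integral_const_mul] at hsw
    rw [hsw]; field_simp

lemma cos2 : IntegrableOn (fun u : ℝ => (1 - Real.cos u) / u ^ 2) (Ioi 0) ∧
    ∫ u in Ioi (0:ℝ), (1 - Real.cos u) / u ^ 2 = Real.pi / 2 := by
  have h := cosA 2 (by norm_num) (by
    simp only [sub_self, Real.rpow_zero, one_mul]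
    exact integrable_inv_one_add_sq.integrableOn)
  simp only [sub_self, Real.rpow_zero, one_mul, integral_Ioi_inv_one_add_sq] at h
  have e : ∀ u ∈ Ioi (0:ℝ), (1 - Real.cos u) * u ^ (-2 : ℝ) = (1 - Real.cos u) / u ^ 2 := by
    intro u hu
    rw [Real.rpow_neg (le_of_lt hu), div_eq_mul_inv]
    norm_cast
  rw [integrableOn_congr_fun e measurableSet_Ioi, setIntegral_congr_fun measurableSet_Ioi e] at h
  refine ⟨h.1, h.2.trans ?_⟩
  simp

lemma cos2y (y : ℝ) : IntegrableOn (fun t : ℝ => (1 - Real.cos (t * y)) / t ^ 2) (Ioi 0) ∧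
    ∫ t in Ioi (0:ℝ), (1 - Real.cos (t * y)) / t ^ 2 = Real.pi / 2 * |y| := by
  rcases eq_or_ne y 0 with rfl | hy
  · simp
  have hy' : 0 < |y| := abs_pos.2 hy
  have e : ∀ t : ℝ, (1 - Real.cos (t * y)) / t ^ 2 = |y| ^ 2 * ((fun u => (1 - Real.cos u) / u ^ 2) (|y| * t)) := by
    intro t
    have : Real.cos (t * y) = Real.cos (|y| * t) := by
      rw [mul_comm t y]
      rcases abs_cases y with h | h
      · rw [h.1]
      · rw [h.1, neg_mul, Real.cos_neg]
    simp only [this]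
    rw [mul_pow]
    field_simp
  simp only [e]
  have g1 := integrableOn_Ioi_comp_mul_left_iff (fun u => (1 - Real.cos u) / u ^ 2) 0 hy'
  have g2 := integral_comp_mul_left_Ioi (fun u => (1 - Real.cos u) / u ^ 2) 0 hy'
  constructor
  · apply Integrable.const_mul
    exact g1.2 (by simpa using cos2.1)
  · rw [integral_const_mul, g2, mul_zero, cos2.2, smul_eq_mul]
    field_simp

lemma six_deriv (r : ℝ) :
    HasDerivAt (fun r => (3 * Real.arctan r + Real.arctan (r ^ 3)) / 2 +
        (Real.sqrt 3 / 4) * (Real.log (r ^ 2 + Real.sqrt 3 * r + 1) - Real.log (r ^ 2 - Real.sqrt 3 * r + 1)))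
      (3 / (1 + r ^ 6)) r := by
  have h3 : Real.sqrt 3 ^ 2 = 3 := Real.sq_sqrt (by norm_num)
  set q := Real.sqrt 3
  have p1 : 0 < r ^ 2 + q * r + 1 := by nlinarith [sq_nonneg (2 * r + q)]
  have p2 : 0 < r ^ 2 - q * r + 1 := by nlinarith [sq_nonneg (2 * r - q)]
  have d1 : HasDerivAt (fun r : ℝ => r ^ 2 + q * r + 1) (2 * r + q) r := by
    have := (((hasDerivAt_pow 2 r).add ((hasDerivAt_id r).const_mul q)).add_const 1)
    refine this.congr_deriv (by simp)
  have d2 : HasDerivAt (fun r : ℝ => r ^ 2 - q * r + 1) (2 * r - q) r := by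
    have := (((hasDerivAt_pow 2 r).sub ((hasDerivAt_id r).const_mul q)).add_const 1)
    refine this.congr_deriv (by simp)
  have h := ((((Real.hasDerivAt_arctan r).const_mul 3).add ((hasDerivAt_pow 3 r).arctan)).div_const 2).add
    (((d1.log p1.ne').sub (d2.log p2.ne')).const_mul (q / 4))
  refine h.congr_deriv ?_
  have e6 : 1 + r ^ 6 = (1 + r ^ 2) * ((r ^ 2 + q * r + 1) * (r ^ 2 - q * r + 1)) := by
    linear_combination (r ^ 2 * (1 + r ^ 2)) * h3
  have e6' : 1 + (r ^ 3) ^ 2 = (1 + r ^ 2) * ((r ^ 2 + q * r + 1) * (r ^ 2 - q * r + 1)) := by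
    rw [← e6]; ring
  have e7 : q / 4 * ((2 * r + q) / (r ^ 2 + q * r + 1) - (2 * r - q) / (r ^ 2 - q * r + 1)) =
      (3 / 2) * (1 - r ^ 2) / ((r ^ 2 + q * r + 1) * (r ^ 2 - q * r + 1)) := by
    rw [div_sub_div _ _ p1.ne' p2.ne', ← mul_div_assoc]
    congr 1
    linear_combination (1 / 2) * (1 - r ^ 2) * h3
  rw [e7, e6, e6']
  have p3 : 1 + r ^ 2 ≠ 0 := by positivity
  have e8 : (r ^ 2 + q * r + 1) * (r ^ 2 - q * r + 1) = r ^ 4 - r ^ 2 + 1 := by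
    linear_combination (-r ^ 2) * h3
  have p4 : r ^ 4 - r ^ 2 + 1 ≠ 0 := by rw [← e8]; positivity
  rw [e8]
  generalize hD : r ^ 4 - r ^ 2 + 1 = D at p4 ⊢
  field_simp
  push_cast
  linear_combination (-3) * hD

lemma six_tendsto : Tendsto (fun r => (3 * Real.arctan r + Real.arctan (r ^ 3)) / 2 +
        (Real.sqrt 3 / 4) * (Real.log (r ^ 2 + Real.sqrt 3 * r + 1) - Real.log (r ^ 2 - Real.sqrt 3 * r + 1)))
      atTop (𝓝 Real.pi) := by
  have h3 : Real.sqrt 3 ^ 2 = 3 := Real.sq_sqrt (by norm_num)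
  set q := Real.sqrt 3
  have a1 : Tendsto Real.arctan atTop (𝓝 (Real.pi / 2)) :=
    tendsto_nhds_of_tendsto_nhdsWithin Real.tendsto_arctan_atTop
  have a2 : Tendsto (fun r : ℝ => Real.arctan (r ^ 3)) atTop (𝓝 (Real.pi / 2)) :=
    a1.comp (tendsto_pow_atTop (by norm_num))
  have a3 : Tendsto (fun r : ℝ => Real.log (r ^ 2 + q * r + 1) - Real.log (r ^ 2 - q * r + 1)) atTop (𝓝 0) := by
    have b1 : Tendsto (fun r : ℝ => r⁻¹) atTop (𝓝 0) := tendsto_inv_atTop_zero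
    have b2 : Tendsto (fun r : ℝ => Real.log (1 + q * r⁻¹ + r⁻¹ ^ 2) - Real.log (1 - q * r⁻¹ + r⁻¹ ^ 2)) atTop (𝓝 0) := by
      have c1 : Tendsto (fun r : ℝ => 1 + q * r⁻¹ + r⁻¹ ^ 2) atTop (𝓝 1) := by
        have := ((b1.const_mul q).const_add 1).add (b1.pow 2)
        simpa using this
      have c2 : Tendsto (fun r : ℝ => 1 - q * r⁻¹ + r⁻¹ ^ 2) atTop (𝓝 1) := by
        have := ((b1.const_mul q).const_sub 1).add (b1.pow 2)
        simpa using this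
      have := (c1.log one_ne_zero).sub (c2.log one_ne_zero)
      simpa using this
    refine b2.congr' ?_
    filter_upwards [eventually_gt_atTop 0] with r hr
    have p1 : 0 < r ^ 2 + q * r + 1 := by nlinarith [sq_nonneg (2 * r + q)]
    have p2 : 0 < r ^ 2 - q * r + 1 := by nlinarith [sq_nonneg (2 * r - q)]
    have f1 : 1 + q * r⁻¹ + r⁻¹ ^ 2 = (r ^ 2 + q * r + 1) / r ^ 2 := by field_simp
    have f2 : 1 - q * r⁻¹ + r⁻¹ ^ 2 = (r ^ 2 - q * r + 1) / r ^ 2 := by field_simp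
    rw [f1, f2, Real.log_div p1.ne' (by positivity), Real.log_div p2.ne' (by positivity)]
    ring
  have := (((a1.const_mul 3).add a2).div_const 2).add (a3.const_mul (q / 4))
  convert this using 2
  ring

lemma six_int : IntegrableOn (fun r : ℝ => 3 / (1 + r ^ 6)) (Ioi 0) ∧
    ∫ r in Ioi (0:ℝ), 3 / (1 + r ^ 6) = Real.pi := by
  have hn : ∀ x ∈ Ioi (0:ℝ), 0 ≤ 3 / (1 + x ^ 6) := fun x _ => by positivity
  refine ⟨integrableOn_Ioi_deriv_of_nonneg' (fun x _ => six_deriv x) hn six_tendsto, ?_⟩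
  rw [integral_Ioi_of_hasDerivAt_of_nonneg' (fun x _ => six_deriv x) hn six_tendsto]
  simp

lemma cos43 : IntegrableOn (fun u : ℝ => (1 - Real.cos u) * u ^ (-(4/3) : ℝ)) (Ioi 0) ∧
    ∫ u in Ioi (0:ℝ), (1 - Real.cos u) * u ^ (-(4/3) : ℝ) = 3 * Real.Gamma (2 / 3) * Real.sqrt 3 / 2 := by
  have e : ∀ r ∈ Ioi (0:ℝ), (3 * r ^ ((3:ℝ) - 1)) • (fun s : ℝ => s ^ ((4/3 : ℝ) - 2) * (1 + s ^ 2)⁻¹) (r ^ (3:ℝ)) = 3 / (1 + r ^ 6) := by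
    intro r hr
    have hr : (0:ℝ) < r := hr
    simp only [smul_eq_mul]
    rw [← Real.rpow_mul hr.le, ← Real.rpow_natCast, ← Real.rpow_mul hr.le]
    have : r ^ ((3:ℝ) - 1) * r ^ ((3:ℝ) * (4/3 - 2)) = 1 := by
      rw [← Real.rpow_add hr]; norm_num
    have h6 : r ^ ((3:ℝ) * ((2:ℕ):ℝ)) = r ^ 6 := by
      rw [← Real.rpow_natCast]; norm_num
    rw [h6, div_eq_mul_inv 3 (1 + r ^ 6), ← mul_assoc, mul_assoc 3, this, mul_one]
  have i1 := integrableOn_Ioi_comp_rpow_iff (fun s : ℝ => s ^ ((4/3 : ℝ) - 2) * (1 + s ^ 2)⁻¹) (p := 3) (by norm_num)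
  have i2 := integral_comp_rpow_Ioi_of_pos (g := fun s : ℝ => s ^ ((4/3 : ℝ) - 2) * (1 + s ^ 2)⁻¹) (p := 3) (by norm_num)
  rw [abs_of_pos (by norm_num : (0:ℝ) < 3), integrableOn_congr_fun e measurableSet_Ioi] at i1
  rw [setIntegral_congr_fun measurableSet_Ioi e, six_int.2] at i2
  have h := cosA (4/3) (by norm_num) (i1.1 six_int.1)
  refine ⟨h.1, h.2.trans ?_⟩
  rw [← i2]
  have g1 : Real.Gamma (4/3) = 1/3 * Real.Gamma (1/3) := by
    rw [show (4/3 : ℝ) = 1/3 + 1 by norm_num, Real.Gamma_add_one (by norm_num)]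
  have g2 := Real.Gamma_mul_Gamma_one_sub (1/3)
  rw [show (1 - 1/3 : ℝ) = 2/3 by norm_num, show Real.pi * (1/3) = Real.pi / 3 by ring, Real.sin_pi_div_three] at g2
  have p1 : 0 < Real.Gamma (1/3) := Real.Gamma_pos_of_pos (by norm_num)
  have p2 : 0 < Real.sqrt 3 := by positivity
  rw [g1]
  field_simp at g2 ⊢
  linear_combination (-1) * g2

lemma cub_int : ∫ x in Ioi (0:ℝ), (1 - Real.cos (2 / 3 * x ^ 3)) / x ^ 2 =
    (2 / 3 : ℝ) ^ ((1:ℝ)/3) * Real.Gamma (2 / 3) * Real.sqrt 3 / 2 := by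
  have i2 := integral_comp_rpow_Ioi_of_pos (g := fun u : ℝ => (1 - Real.cos (2 / 3 * u)) * (2 / 3 * u) ^ (-(4/3) : ℝ)) (p := 3) (by norm_num)
  have i3 := integral_comp_mul_left_Ioi (fun u : ℝ => (1 - Real.cos u) * u ^ (-(4/3) : ℝ)) 0 (b := 2/3) (by norm_num)
  simp only [mul_zero] at i3
  rw [cos43.2] at i3
  rw [i3] at i2
  have e : ∀ x ∈ Ioi (0:ℝ), (3 * x ^ ((3:ℝ) - 1)) • ((1 - Real.cos (2 / 3 * x ^ (3:ℝ))) * (2 / 3 * x ^ (3:ℝ)) ^ (-(4/3) : ℝ)) =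
      (3 * (2 / 3 : ℝ) ^ (-(4/3) : ℝ)) * ((1 - Real.cos (2 / 3 * x ^ 3)) / x ^ 2) := by
    intro x hx
    have hx : (0:ℝ) < x := hx
    have h3 : x ^ (3:ℝ) = x ^ 3 := by rw [← Real.rpow_natCast]; norm_num
    have h4 : x ^ ((3:ℝ) - 1) * (x ^ (3:ℝ)) ^ (-(4/3) : ℝ) = (x ^ 2)⁻¹ := by
      rw [← Real.rpow_mul hx.le, ← Real.rpow_add hx, ← Real.rpow_natCast, ← Real.rpow_neg hx.le]
      norm_num
    rw [Real.mul_rpow (by norm_num) (by positivity), smul_eq_mul, div_eq_mul_inv _ (x ^ 2), ← h4, h3]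
    ring
  rw [setIntegral_congr_fun measurableSet_Ioi e, integral_const_mul] at i2
  have h5 : (2 / 3 : ℝ) ^ (-(4/3) : ℝ) * ((2 / 3 : ℝ) ^ ((1:ℝ)/3) * (2 / 3)) = 1 := by
    nth_rewrite 3 [← Real.rpow_one (2 / 3 : ℝ)]
    rw [← Real.rpow_add (by norm_num), ← Real.rpow_add (by norm_num)]
    norm_num
  have h6 : (2 / 3 : ℝ) ^ (-(4/3) : ℝ) ≠ 0 := by positivity
  rw [smul_eq_mul] at i2
  have h7 : (3 * (2 / 3 : ℝ) ^ (-(4/3) : ℝ)) ≠ 0 := by positivity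
  apply mul_left_cancel₀ h7
  rw [i2]
  linear_combination (-(9/4) * Real.Gamma (2/3) * Real.sqrt 3) * h5

end LP

namespace LP
open MeasureTheory Set Filter Topology

noncomputable def gam (i : ℕ) (s : ℝ) : ℝ := Real.exp (-s) * (s ^ i / i.factorial)

noncomputable def Es (i : ℕ) (s : ℝ) : ℝ := Real.exp (-s) * ∑ q ∈ Finset.range (i + 1), s ^ q / q.factorial

lemma gam_cont (i : ℕ) : Continuous (gam i) := by unfold gam; fun_prop

lemma gam_nonneg (i : ℕ) (s : ℝ) (hs : 0 ≤ s) : 0 ≤ gam i s := by unfold gam; positivity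

lemma gam_int (i : ℕ) : IntegrableOn (gam i) (Ioi 0) := by
  have h := Real.GammaIntegral_convergent (s := (i : ℝ) + 1) (by positivity)
  have := h.div_const (i.factorial : ℝ)
  refine IntegrableOn.congr_fun this ?_ measurableSet_Ioi
  intro s hs
  simp only [gam, add_sub_cancel_right, Real.rpow_natCast]
  ring

lemma gam_tendsto (i : ℕ) : Tendsto (gam i) atTop (𝓝 0) := by
  have := (Real.tendsto_pow_mul_exp_neg_atTop_nhds_zero i).div_const (i.factorial : ℝ)
  simp only [zero_div] at this
  refine this.congr (fun s => ?_)
  simp only [gam]; ring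

lemma gam_mul (i : ℕ) (s : ℝ) : s * gam i s = (i + 1) * gam (i + 1) s := by
  have : (i.factorial : ℝ) ≠ 0 := by positivity
  have : (i : ℝ) + 1 ≠ 0 := by positivity
  simp only [gam, Nat.factorial_succ]
  push_cast
  field_simp
  ring

lemma Es_zero (s : ℝ) : Es 0 s = gam 0 s := by simp [Es, gam]
lemma Es_succ (i : ℕ) (s : ℝ) : Es (i + 1) s = Es i s + gam (i + 1) s := by
  simp [Es, gam, Finset.sum_range_succ _ (i + 1), mul_add]

lemma gam_deriv0 (s : ℝ) : HasDerivAt (gam 0) (-gam 0 s) s := by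
  have : gam 0 = fun s => Real.exp (-s) := by ext s; simp [gam]
  rw [this]
  exact ((hasDerivAt_id s).neg.exp).congr_deriv (by simp)

lemma gam_deriv (i : ℕ) (s : ℝ) : HasDerivAt (gam (i + 1)) (gam i s - gam (i + 1) s) s := by
  have := ((hasDerivAt_id s).neg.exp).mul ((hasDerivAt_pow (i + 1) s).div_const ((i + 1).factorial : ℝ))
  refine this.congr_deriv ?_
  have : (i.factorial : ℝ) ≠ 0 := by positivity
  have : (i : ℝ) + 1 ≠ 0 := by positivity
  simp only [gam, Nat.factorial_succ, add_tsub_cancel_right, id, Pi.neg_apply]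
  push_cast
  field_simp
  ring

lemma Es_deriv (i : ℕ) (s : ℝ) : HasDerivAt (Es i) (-gam i s) s := by
  induction i with
  | zero =>
    have : Es 0 = gam 0 := by ext s; exact Es_zero s
    rw [this]; exact gam_deriv0 s
  | succ i ih =>
    have : Es (i + 1) = fun s => Es i s + gam (i + 1) s := by ext s; exact Es_succ i s
    rw [this]
    exact (ih.add (gam_deriv i s)).congr_deriv (by ring)

lemma Es_tendsto (i : ℕ) : Tendsto (Es i) atTop (𝓝 0) := by
  induction i with
  | zero =>
    have : Es 0 = gam 0 := by ext s; exact Es_zero s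
    rw [this]; exact gam_tendsto 0
  | succ i ih =>
    have : Es (i + 1) = fun s => Es i s + gam (i + 1) s := by ext s; exact Es_succ i s
    rw [this]
    simpa using ih.add (gam_tendsto (i + 1))

lemma Es_at0 (i : ℕ) : Es i 0 = 1 := by
  induction i with
  | zero => simp [Es]
  | succ i ih => rw [Es_succ, ih]; simp [gam]

noncomputable def Phi (i : ℕ) (x s : ℝ) : ℝ := -((i + 1) * Es (i + 1) s) + x * Es i s

lemma Phi_deriv (i : ℕ) (x s : ℝ) : HasDerivAt (Phi i x) (gam i s * (s - x)) s := by
  refine (((Es_deriv (i + 1) s).const_mul ((i : ℝ) + 1)).neg.add ((Es_deriv i s).const_mul x)).congr_deriv ?_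
  have := gam_mul i s
  linear_combination -this

lemma Phi_x (i : ℕ) (x : ℝ) : Phi i x x = -(Real.exp (-x) * ∑ q ∈ Finset.range (i + 1 + 1), (((i + 1 : ℕ) : ℝ) - q) * x ^ q / q.factorial) := by
  have h : ∀ m : ℕ, ∑ q ∈ Finset.range (m + 1), (q : ℝ) * x ^ q / q.factorial = x * ∑ q ∈ Finset.range m, x ^ q / q.factorial := by
    intro m
    rw [Finset.sum_range_succ', Finset.mul_sum]
    simp only [Nat.cast_zero, zero_mul, zero_div, add_zero]
    apply Finset.sum_congr rfl
    intro q _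
    have : (q.factorial : ℝ) ≠ 0 := by positivity
    have : (q : ℝ) + 1 ≠ 0 := by positivity
    rw [Nat.factorial_succ]
    push_cast
    field_simp
    ring
  have h2 : ∑ q ∈ Finset.range (i + 1 + 1), (((i + 1 : ℕ) : ℝ) - q) * x ^ q / q.factorial =
      (i + 1) * ∑ q ∈ Finset.range (i + 1 + 1), x ^ q / q.factorial - ∑ q ∈ Finset.range (i + 1 + 1), (q : ℝ) * x ^ q / q.factorial := by
    rw [Finset.mul_sum, ← Finset.sum_sub_distrib]
    apply Finset.sum_congr rfl
    intro q _
    push_cast; ring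
  rw [h2, h, Phi, Es, Es]
  ring

lemma mom (i : ℕ) (x : ℝ) (hx : 0 ≤ x) : IntegrableOn (fun s => gam i s * |x - s|) (Ioi 0) ∧
    ∫ s in Ioi (0:ℝ), gam i s * |x - s| = x - ((i + 1 : ℕ) : ℝ) +
      2 * (Real.exp (-x) * ∑ q ∈ Finset.range (i + 1 + 1), (((i + 1 : ℕ) : ℝ) - q) * x ^ q / q.factorial) := by
  have h0 : IntegrableOn (fun s => gam i s * (s - x)) (Ioi 0) := by
    have := ((gam_int (i + 1)).const_mul ((i : ℝ) + 1)).sub ((gam_int i).const_mul x)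
    refine this.congr ?_
    filter_upwards with s
    have := gam_mul i s
    simp only [Pi.sub_apply]
    linear_combination -this
  have hI : IntegrableOn (fun s => gam i s * |x - s|) (Ioi 0) := by
    refine IntegrableOn.congr_fun h0.norm ?_ measurableSet_Ioi
    intro s hs
    simp only [norm_mul, Real.norm_eq_abs]
    rw [abs_of_nonneg (gam_nonneg i s (le_of_lt hs)), abs_sub_comm]
  refine ⟨hI, ?_⟩
  rw [← Ioc_union_Ioi_eq_Ioi hx, setIntegral_union (Ioc_disjoint_Ioi le_rfl) measurableSet_Ioi
    (hI.mono_set Ioc_subset_Ioi_self) (hI.mono_set (Ioi_subset_Ioi hx))]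
  have e1 : ∫ s in Ioc 0 x, gam i s * |x - s| = -(Phi i x x - Phi i x 0) := by
    rw [setIntegral_congr_fun (g := fun s => -(gam i s * (s - x))) measurableSet_Ioc, integral_neg,
      ← intervalIntegral.integral_of_le hx, intervalIntegral.integral_eq_sub_of_hasDerivAt (fun s _ => Phi_deriv i x s)]
    · apply Continuous.intervalIntegrable
      have := gam_cont i
      fun_prop
    · intro s hs
      simp only
      rw [abs_of_nonneg (by linarith [hs.2])]; ring
  have ht : Tendsto (Phi i x) atTop (𝓝 0) := by
    have := ((Es_tendsto (i + 1)).const_mul ((i : ℝ) + 1)).neg.add ((Es_tendsto i).const_mul x)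
    rw [mul_zero, mul_zero, neg_zero, add_zero] at this
    exact this
  have e2 : ∫ s in Ioi x, gam i s * |x - s| = 0 - Phi i x x := by
    rw [setIntegral_congr_fun (g := fun s => (gam i s * (s - x))) measurableSet_Ioi,
      integral_Ioi_of_hasDerivAt_of_nonneg' (fun s _ => Phi_deriv i x s) _ ht]
    · intro s hs
      have : x < s := hs
      exact mul_nonneg (gam_nonneg i s (by linarith)) (by linarith)
    · intro s hs
      have : x < s := hs
      simp only
      rw [abs_of_nonpos (by linarith)]; ring
  rw [e1, e2, Phi_x]
  simp only [Phi, Es_at0]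
  push_cast
  ring

lemma lap_norm (t s : ℝ) : ‖Complex.exp (-(Complex.I * t * s))‖ = 1 := by
  rw [show -(Complex.I * (t:ℂ) * s) = ((-(t * s) : ℝ) : ℂ) * Complex.I by push_cast; ring]
  exact Complex.norm_exp_ofReal_mul_I _

lemma lap_integrable (i : ℕ) (t : ℝ) :
    IntegrableOn (fun s : ℝ => (gam i s : ℂ) * Complex.exp (-(Complex.I * t * s))) (Ioi 0) := by
  refine Integrable.mono' (gam_int i).norm ?_ ?_
  · apply Continuous.aestronglyMeasurable
    have := gam_cont i
    fun_prop
  · filter_upwards with s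
    rw [norm_mul, lap_norm, mul_one, Complex.norm_real]

lemma lap (i : ℕ) (t : ℝ) :
    ∫ s in Ioi (0:ℝ), (gam i s : ℂ) * Complex.exp (-(Complex.I * t * s)) = ((1 + Complex.I * t)⁻¹) ^ (i + 1) := by
  have hz : (1 + Complex.I * (t:ℂ)) ≠ 0 := by
    intro h
    have := congrArg Complex.re h
    simp at this
  have hexp : ∀ s : ℝ, HasDerivAt (fun s : ℝ => Complex.exp (-(Complex.I * t * s)))
      (Complex.exp (-(Complex.I * t * s)) * (-(Complex.I * t))) s := by
    intro s
    have := ((((hasDerivAt_id s).ofReal_comp).const_mul (Complex.I * (t:ℂ))).neg).cexp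
    refine this.congr_deriv ?_
    simp
  have htend : ∀ i, Tendsto (fun s : ℝ => (gam i s : ℂ) * Complex.exp (-(Complex.I * t * s))) atTop (𝓝 0) := by
    intro i
    rw [tendsto_zero_iff_norm_tendsto_zero]
    have := (gam_tendsto i).norm
    rw [norm_zero] at this
    refine this.congr (fun s => ?_)
    rw [norm_mul, lap_norm, mul_one, Complex.norm_real]
  have hcont : ∀ i, Continuous (fun s : ℝ => (gam i s : ℂ) * Complex.exp (-(Complex.I * t * s))) := by
    intro i
    have := gam_cont i
    fun_prop
  induction i with
  | zero =>
    have hd : ∀ s ∈ Ioi (0:ℝ), HasDerivAt (fun s : ℝ => (gam 0 s : ℂ) * Complex.exp (-(Complex.I * t * s)))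
        (-(1 + Complex.I * t) * ((gam 0 s : ℂ) * Complex.exp (-(Complex.I * t * s)))) s := by
      intro s _
      refine (((gam_deriv0 s).ofReal_comp).mul (hexp s)).congr_deriv ?_
      push_cast; ring
    have := integral_Ioi_of_hasDerivAt_of_tendsto (hcont 0).continuousWithinAt hd
      ((lap_integrable 0 t).const_mul _) (htend 0)
    rw [integral_const_mul] at this
    set X := ∫ s in Ioi (0:ℝ), (gam 0 s : ℂ) * Complex.exp (-(Complex.I * t * s))
    have g0 : gam 0 0 = 1 := by simp [gam]
    simp only [g0, Complex.ofReal_zero, mul_zero, neg_zero, Complex.exp_zero, Complex.ofReal_one, mul_one, zero_sub] at this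
    rw [zero_add, pow_one]
    field_simp
    linear_combination -this
  | succ i ih =>
    have hd : ∀ s ∈ Ioi (0:ℝ), HasDerivAt (fun s : ℝ => (gam (i + 1) s : ℂ) * Complex.exp (-(Complex.I * t * s)))
        ((gam i s : ℂ) * Complex.exp (-(Complex.I * t * s)) - (1 + Complex.I * t) * ((gam (i + 1) s : ℂ) * Complex.exp (-(Complex.I * t * s)))) s := by
      intro s _
      refine (((gam_deriv i s).ofReal_comp).mul (hexp s)).congr_deriv ?_
      push_cast; ring
    have := integral_Ioi_of_hasDerivAt_of_tendsto (hcont (i + 1)).continuousWithinAt hd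
      ((lap_integrable i t).sub ((lap_integrable (i + 1) t).const_mul _)) (htend (i + 1))
    rw [integral_sub (lap_integrable i t) ((lap_integrable (i + 1) t).const_mul _), integral_const_mul, ih] at this
    set X := ∫ s in Ioi (0:ℝ), (gam (i + 1) s : ℂ) * Complex.exp (-(Complex.I * t * s))
    have g0 : gam (i + 1) 0 = 0 := by simp [gam]
    simp only [g0, Complex.ofReal_zero, zero_mul, sub_self] at this
    have h2 := sub_eq_zero.1 this
    rw [pow_succ _ (i + 1), h2]
    field_simp

noncomputable def qf (i : ℕ) (x t : ℝ) : ℝ :=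
  (1 - (Complex.exp (Complex.I * t * x) * ((1 + Complex.I * t)⁻¹) ^ i).re) / t ^ 2

lemma inner_s (i : ℕ) (x t : ℝ) :
    ∫ s in Ioi (0:ℝ), gam i s * (1 - Real.cos (t * (x - s))) =
      1 - (Complex.exp (Complex.I * t * x) * ((1 + Complex.I * t)⁻¹) ^ (i + 1)).re := by
  have h0 := lap i 0
  have i0 := lap_integrable i 0
  have h1 := lap i t
  have i1 := lap_integrable i t
  have h2 := integral_sub i0 (i1.const_mul (Complex.exp (Complex.I * t * x)))
  rw [integral_const_mul, h0, h1] at h2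
  have h3 := congrArg Complex.re h2
  have h4 := integral_re (i0.sub (i1.const_mul (Complex.exp (Complex.I * t * x))))
  replace h3 := h4.trans h3
  simp only [Complex.ofReal_zero, mul_zero, add_zero, inv_one, one_pow, Complex.sub_re, Complex.one_re, zero_mul, neg_zero, Complex.exp_zero, mul_one] at h3
  rw [← h3]
  congr 1
  ext s
  simp only [Pi.sub_apply]
  rw [mul_left_comm, ← Complex.exp_add, show Complex.I * t * x + -(Complex.I * t * s) = ((t * (x - s) : ℝ) : ℂ) * Complex.I by push_cast; ring]
  rw [map_sub, RCLike.re_eq_complex_re, Complex.re_ofReal_mul, Complex.exp_ofReal_mul_I_re, Complex.ofReal_re]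
  ring

lemma qf_int (i : ℕ) (x : ℝ) (hx : 0 ≤ x) : IntegrableOn (qf i x) (Ioi 0) ∧
    ∫ t in Ioi (0:ℝ), qf i x t = Real.pi / 2 * (x - i +
      2 * (Real.exp (-x) * ∑ q ∈ Finset.range (i + 1), ((i : ℝ) - q) * x ^ q / q.factorial)) := by
  cases i with
  | zero =>
    have e : qf 0 x = fun t => (1 - Real.cos (t * x)) / t ^ 2 := by
      ext t
      simp only [qf, pow_zero, mul_one]
      rw [show Complex.I * (t:ℂ) * x = ((t * x : ℝ) : ℂ) * Complex.I by push_cast; ring, Complex.exp_ofReal_mul_I_re]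
    rw [e]
    have := cos2y x
    refine ⟨this.1, this.2.trans ?_⟩
    rw [abs_of_nonneg hx]
    simp
  | succ i =>
    set μ : Measure ℝ := volume.restrict (Ioi 0) with hμ
    let H : ℝ → ℝ → ℝ := fun t s => gam i s * ((1 - Real.cos (t * (x - s))) / t ^ 2)
    have hpos : ∀ᵐ s ∂μ, 0 < s := ae_restrict_mem measurableSet_Ioi
    have hHn : ∀ s, 0 < s → ∀ t, 0 ≤ H t s := fun s hs t =>
      mul_nonneg (gam_nonneg i s hs.le) (div_nonneg (by linarith [Real.cos_le_one (t * (x - s))]) (sq_nonneg t))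
    have hm : Measurable (Function.uncurry H) := by
      unfold Function.uncurry H gam
      fun_prop
    have hin : ∀ s, ∫ t, H t s ∂μ = Real.pi / 2 * (gam i s * |x - s|) := by
      intro s
      simp only [H]
      rw [integral_const_mul, hμ, (cos2y (x - s)).2]; ring
    have hint : Integrable (Function.uncurry H) (μ.prod μ) := by
      rw [integrable_prod_iff' hm.aestronglyMeasurable]
      constructor
      · filter_upwards with s
        exact (cos2y (x - s)).1.const_mul (gam i s)
      · refine Integrable.congr ((mom i x hx).1.const_mul (Real.pi / 2)) ?_
        filter_upwards [hpos] with s hs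
        rw [← hin s]
        apply integral_congr_ae
        filter_upwards with t
        simp [Function.uncurry, abs_of_nonneg (hHn s hs t)]
    have hout : ∀ t, ∫ s, H t s ∂μ = qf (i + 1) x t := by
      intro t
      have e : ∀ s, H t s = (gam i s * (1 - Real.cos (t * (x - s)))) / t ^ 2 := fun s => by
        simp only [H]; ring
      simp only [e]
      rw [integral_div, hμ, inner_s, qf]
    have hsw := integral_integral_swap hint
    have hr := hint.integral_prod_left
    simp only [Function.uncurry, hout] at hr
    simp only [hout, hin] at hsw
    refine ⟨hr, hsw.trans ?_⟩
    rw [integral_const_mul, hμ, (mom i x hx).2]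

lemma phase (t : ℝ) : (1 - Complex.I * t) * (1 + Complex.I * t)⁻¹ = Complex.exp (Complex.I * ((-2 * Real.arctan t : ℝ) : ℂ)) := by
  have hz : (1 + Complex.I * (t:ℂ)) ≠ 0 := by
    intro h
    have := congrArg Complex.re h
    simp at this
  have hs : (0:ℝ) < Real.sqrt (1 + t ^ 2) := by positivity
  have hs' : (Real.sqrt (1 + t ^ 2) : ℂ) ≠ 0 := by exact_mod_cast hs.ne'
  have h1 : Complex.exp (Real.arctan t * Complex.I) = (1 + Complex.I * t) / Real.sqrt (1 + t ^ 2) := by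
    rw [Complex.exp_mul_I, ← Complex.ofReal_cos, ← Complex.ofReal_sin, Real.cos_arctan, Real.sin_arctan]
    push_cast; ring
  have h2 : Complex.exp (((-Real.arctan t : ℝ) : ℂ) * Complex.I) = (1 - Complex.I * t) / Real.sqrt (1 + t ^ 2) := by
    rw [Complex.exp_mul_I, ← Complex.ofReal_cos, ← Complex.ofReal_sin, Real.cos_neg, Real.sin_neg, Real.cos_arctan, Real.sin_arctan]
    push_cast; ring
  have h3 : Complex.exp (Complex.I * ((-2 * Real.arctan t : ℝ) : ℂ)) * Complex.exp (Real.arctan t * Complex.I) = Complex.exp (((-Real.arctan t : ℝ) : ℂ) * Complex.I) := by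
    rw [← Complex.exp_add]
    congr 1
    push_cast; ring
  rw [h1, h2] at h3
  field_simp at h3 ⊢
  exact h3.symm

lemma one_sum (k : ℕ) : ∑ i ∈ Finset.range (k + 1), ((k.choose i : ℝ) * (-1) ^ (k - i) * 2 ^ i) = 1 := by
  have := add_pow (2:ℝ) (-1) k
  rw [show (2:ℝ) + -1 = 1 by norm_num, one_pow] at this
  refine Eq.trans ?_ this.symm
  apply Finset.sum_congr rfl; intro i _; ring

lemma qf_sum (k : ℕ) (t : ℝ) : ∑ i ∈ Finset.range (k + 1), ((k.choose i : ℝ) * (-1) ^ (k - i) * 2 ^ i) * qf i (2 * k) t =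
    (1 - Real.cos (2 * k * (t - Real.arctan t))) / t ^ 2 := by
  have hz : (1 + Complex.I * (t:ℂ)) ≠ 0 := by
    intro h
    have := congrArg Complex.re h
    simp at this
  have h1 := one_sum k
  have h2 : ∑ i ∈ Finset.range (k + 1), (((k.choose i : ℝ) * (-1) ^ (k - i) * 2 ^ i : ℝ) : ℂ) *
      (Complex.exp (Complex.I * t * (2 * k : ℝ)) * ((1 + Complex.I * t)⁻¹) ^ i) =
      Complex.exp (((2 * k * (t - Real.arctan t) : ℝ) : ℂ) * Complex.I) := by
    have := add_pow (2 * (1 + Complex.I * t)⁻¹) (-1) k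
    have e : 2 * (1 + Complex.I * t)⁻¹ + -1 = (1 - Complex.I * t) * (1 + Complex.I * t)⁻¹ := by
      field_simp; ring
    rw [e, phase, ← Complex.exp_nat_mul] at this
    have e2 : Complex.exp (((2 * k * (t - Real.arctan t) : ℝ) : ℂ) * Complex.I) =
      Complex.exp (Complex.I * t * (2 * k : ℝ)) * Complex.exp (k * (Complex.I * ((-2 * Real.arctan t : ℝ) : ℂ))) := by
      rw [← Complex.exp_add]; congr 1; push_cast; ring
    rw [e2, this, Finset.mul_sum]
    apply Finset.sum_congr rfl; intro i _
    rw [mul_pow]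
    push_cast; ring
  have h3 := congrArg Complex.re h2
  rw [Complex.re_sum, Complex.exp_ofReal_mul_I_re] at h3
  simp only [Complex.re_ofReal_mul] at h3
  rw [← h3]
  have h4 : ∀ Y : ℝ, 1 - Y = (∑ i ∈ Finset.range (k + 1), ((k.choose i : ℝ) * (-1) ^ (k - i) * 2 ^ i)) - Y := fun Y => by rw [h1]
  rw [h4, ← Finset.sum_sub_distrib, Finset.sum_div]
  apply Finset.sum_congr rfl; intro i _
  rw [qf]; ring

lemma lin_sum (k : ℕ) : ∑ i ∈ Finset.range (k + 1), ((k.choose i : ℝ) * (-1) ^ (k - i) * 2 ^ i) * (2 * (k:ℝ) - i) = 0 := by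
  cases k with
  | zero => simp
  | succ m =>
    simp only [mul_sub, Finset.sum_sub_distrib]
    rw [← Finset.sum_mul, one_sum, Finset.sum_range_succ']
    have e : ∀ i ∈ Finset.range (m + 1), (((m + 1).choose (i + 1) : ℝ) * (-1) ^ (m + 1 - (i + 1)) * 2 ^ (i + 1)) * ((i + 1 : ℕ) : ℝ) =
        2 * ((m : ℝ) + 1) * ((m.choose i : ℝ) * (-1) ^ (m - i) * 2 ^ i) := by
      intro i _
      have h := Nat.add_one_mul_choose_eq m i
      have h' : ((m : ℝ) + 1) * (m.choose i) = ((m + 1).choose (i + 1)) * ((i + 1 : ℕ) : ℝ) := by exact_mod_cast h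
      rw [Nat.add_sub_add_right, pow_succ]
      linear_combination (-(2 * (-1) ^ (m - i) * 2 ^ i)) * h'
    rw [Finset.sum_congr rfl e, ← Finset.mul_sum, one_sum]
    push_cast
    ring

lemma Ik_eq (k : ℕ) : ∫ t in Ioi (0:ℝ), (1 - Real.cos (2 * k * (t - Real.arctan t))) / t ^ 2 =
    Real.pi * (Real.exp (-(2 * k)) * pk k) := by
  have hx : (0:ℝ) ≤ 2 * k := by positivity
  have e : ∀ t, (1 - Real.cos (2 * k * (t - Real.arctan t))) / t ^ 2 = _ := fun t => (qf_sum k t).symm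
  simp only [e]
  rw [integral_finsetSum _ (fun i _ => (qf_int i (2 * k) hx).1.const_mul _)]
  simp only [integral_const_mul, (qf_int _ (2 * k) hx).2]
  have h := lin_sum k
  calc _ = Real.pi / 2 * (∑ i ∈ Finset.range (k + 1), ((k.choose i : ℝ) * (-1) ^ (k - i) * 2 ^ i) * (2 * (k:ℝ) - i)) +
      Real.pi * (Real.exp (-(2 * k)) * pk k) := by
        rw [pk]
        simp only [Finset.mul_sum]
        rw [← Finset.sum_add_distrib]
        apply Finset.sum_congr rfl; intro i _
        rw [mul_add, mul_add]
        congr 1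
        · ring
        · simp only [Finset.mul_sum]
          apply Finset.sum_congr rfl; intro q _; ring
    _ = _ := by rw [h]; ring

end LP

namespace LP
open MeasureTheory Set Filter Topology

lemma mono_helper (f f' : ℝ → ℝ) (h : ∀ x, HasDerivAt f (f' x) x) (h' : ∀ x, 0 ≤ f' x) (h0 : f 0 = 0) (t : ℝ) (ht : 0 ≤ t) :
    0 ≤ f t := by
  have := monotone_of_deriv_nonneg (fun x => (h x).differentiableAt) (fun x => by rw [(h x).deriv]; exact h' x)
  rw [← h0]; exact this ht

lemma sub_arctan_deriv (t : ℝ) : HasDerivAt (fun t => t - Real.arctan t) (t ^ 2 / (1 + t ^ 2)) t := by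
  refine ((hasDerivAt_id t).sub (Real.hasDerivAt_arctan t)).congr_deriv ?_
  have : 1 + t ^ 2 ≠ 0 := by positivity
  field_simp
  ring

lemma ar0 (t : ℝ) (ht : 0 ≤ t) : 0 ≤ t - Real.arctan t :=
  mono_helper _ _ sub_arctan_deriv (fun x => by positivity) (by simp) t ht

lemma ar1 (t : ℝ) (ht : 0 ≤ t) : t - Real.arctan t ≤ t ^ 3 / 3 := by
  have := mono_helper (fun t => t ^ 3 / 3 - (t - Real.arctan t)) (fun t => t ^ 4 / (1 + t ^ 2)) (fun x => by
    refine (((hasDerivAt_pow 3 x).div_const 3).sub (sub_arctan_deriv x)).congr_deriv ?_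
    have : 1 + x ^ 2 ≠ 0 := by positivity
    field_simp
    push_cast
    ring) (fun x => by positivity) (by simp) t ht
  linarith

lemma ar2 (t : ℝ) (ht : 0 ≤ t) : t ^ 3 / 3 - t ^ 5 / 5 ≤ t - Real.arctan t := by
  have := mono_helper (fun t => (t - Real.arctan t) - (t ^ 3 / 3 - t ^ 5 / 5)) (fun t => t ^ 6 / (1 + t ^ 2)) (fun x => by
    refine ((sub_arctan_deriv x).sub (((hasDerivAt_pow 3 x).div_const 3).sub ((hasDerivAt_pow 5 x).div_const 5))).congr_deriv ?_
    have : 1 + x ^ 2 ≠ 0 := by positivity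
    field_simp
    push_cast
    ring) (fun x => by positivity) (by simp) t ht
  linarith

noncomputable def ep (k : ℕ) : ℝ := (k : ℝ) ^ (-(1/3) : ℝ)

lemma ep_nonneg (k : ℕ) : 0 ≤ ep k := by unfold ep; positivity

lemma ep_cube (k : ℕ) (hk : 0 < k) : (k : ℝ) * ep k ^ 3 = 1 := by
  have : (0:ℝ) < k := by exact_mod_cast hk
  rw [ep, ← Real.rpow_natCast, ← Real.rpow_mul this.le]
  norm_num
  rw [Real.rpow_neg_one]
  field_simp

lemma ep_tendsto : Tendsto ep atTop (𝓝 0) :=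
  (tendsto_rpow_neg_atTop (by norm_num : (0:ℝ) < 1/3)).comp tendsto_natCast_atTop_atTop

lemma one_sub_cos_le (φ : ℝ) : 1 - Real.cos φ ≤ φ ^ 2 / 2 := by
  linarith [Real.one_sub_sq_div_two_le_cos (x := φ)]

lemma F_tendsto : Tendsto (fun k : ℕ => ∫ x in Ioi (0:ℝ), (1 - Real.cos (2 * k * (ep k * x - Real.arctan (ep k * x)))) / x ^ 2)
    atTop (𝓝 (∫ x in Ioi (0:ℝ), (1 - Real.cos (2 / 3 * x ^ 3)) / x ^ 2)) := by
  have hpos : ∀ᵐ s ∂(volume.restrict (Ioi (0:ℝ))), 0 < s := ae_restrict_mem measurableSet_Ioi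
  apply tendsto_integral_of_dominated_convergence (fun x => 4 * (1 + x ^ 2)⁻¹)
  · intro k
    apply Measurable.aestronglyMeasurable
    fun_prop
  · exact (integrable_inv_one_add_sq.const_mul 4).integrableOn
  · intro k
    filter_upwards [hpos] with x hx
    set φ := 2 * k * (ep k * x - Real.arctan (ep k * x)) with hφ
    have e0 : 0 ≤ ep k * x := mul_nonneg (ep_nonneg k) hx.le
    have hφ0 : 0 ≤ φ := mul_nonneg (by positivity) (ar0 _ e0)
    have hφ1 : φ ≤ 2 / 3 * x ^ 3 := by
      rcases Nat.eq_zero_or_pos k with h | h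
      · rw [hφ, h]; simp; positivity
      · have h1 := ep_cube k h
        have h2 : φ ≤ 2 * k * ((ep k * x) ^ 3 / 3) := mul_le_mul_of_nonneg_left (ar1 _ e0) (by positivity)
        have h3 : 2 * k * ((ep k * x) ^ 3 / 3) = 2 / 3 * x ^ 3 := by
          linear_combination (2 / 3 * x ^ 3) * h1
        linarith
    have hc := Real.cos_le_one φ
    have hc' := Real.neg_one_le_cos φ
    rw [Real.norm_eq_abs, abs_of_nonneg (div_nonneg (by linarith) (by positivity)), ← div_eq_mul_inv,
      div_le_div_iff₀ (by positivity) (by positivity)]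
    rcases le_total x 1 with h | h
    · have h1 : 1 - Real.cos φ ≤ x ^ 2 := by
        have h2 := one_sub_cos_le φ
        have h3 : φ ≤ x := hφ1.trans (by nlinarith [mul_nonneg hx.le (sub_nonneg.2 h), mul_nonneg (mul_nonneg hx.le hx.le) (sub_nonneg.2 h)])
        nlinarith
      nlinarith [mul_nonneg hx.le (sub_nonneg.2 h), sq_nonneg x]
    · nlinarith [mul_nonneg (sub_nonneg.2 h) hx.le, sq_nonneg x]
  · filter_upwards [hpos] with x hx
    have hφ : Tendsto (fun k : ℕ => 2 * k * (ep k * x - Real.arctan (ep k * x))) atTop (𝓝 (2 / 3 * x ^ 3)) := by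
      have l1 : Tendsto (fun k : ℕ => 2 / 3 * x ^ 3 - 2 / 5 * x ^ 5 * ep k ^ 2) atTop (𝓝 (2 / 3 * x ^ 3)) := by
        have := ((ep_tendsto.pow 2).const_mul (2 / 5 * x ^ 5)).const_sub (2 / 3 * x ^ 3)
        simpa using this
      refine tendsto_of_tendsto_of_tendsto_of_le_of_le' l1 tendsto_const_nhds ?_ ?_
      · filter_upwards [eventually_gt_atTop 0] with k hk
        have h1 := ep_cube k hk
        have e0 : 0 ≤ ep k * x := mul_nonneg (ep_nonneg k) hx.le
        have h2 := mul_le_mul_of_nonneg_left (ar2 _ e0) (by positivity : (0:ℝ) ≤ 2 * k)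
        refine le_trans (le_of_eq ?_) h2
        linear_combination (-(2 / 3 * x ^ 3) + 2 / 5 * x ^ 5 * ep k ^ 2) * h1
      · filter_upwards [eventually_gt_atTop 0] with k hk
        have h1 := ep_cube k hk
        have e0 : 0 ≤ ep k * x := mul_nonneg (ep_nonneg k) hx.le
        have h2 := mul_le_mul_of_nonneg_left (ar1 _ e0) (by positivity : (0:ℝ) ≤ 2 * k)
        refine le_trans h2 (le_of_eq ?_)
        linear_combination (2 / 3 * x ^ 3) * h1
    exact (((Real.continuous_cos.tendsto _).comp hφ).const_sub 1).div_const (x ^ 2)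

lemma Y_tendsto : Tendsto (fun k : ℕ => ep k * (Real.pi * (Real.exp (-(2 * k)) * pk k))) atTop
    (𝓝 ((2 / 3 : ℝ) ^ ((1:ℝ)/3) * Real.Gamma (2 / 3) * Real.sqrt 3 / 2)) := by
  rw [← cub_int]
  refine F_tendsto.congr' ?_
  filter_upwards [eventually_gt_atTop 0] with k hk
  have hk' : (0:ℝ) < k := by exact_mod_cast hk
  have he : 0 < ep k := by unfold ep; positivity
  have h := integral_comp_mul_left_Ioi (fun t : ℝ => (1 - Real.cos (2 * k * (t - Real.arctan t))) / t ^ 2) 0 he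
  rw [mul_zero, Ik_eq, smul_eq_mul] at h
  have e : ∀ x : ℝ, (1 - Real.cos (2 * k * (ep k * x - Real.arctan (ep k * x)))) / x ^ 2 =
      ep k ^ 2 * ((1 - Real.cos (2 * k * (ep k * x - Real.arctan (ep k * x)))) / (ep k * x) ^ 2) := by
    intro x
    rw [mul_pow]; field_simp
  simp only [e]
  rw [integral_const_mul, h]
  field_simp

lemma const_id : Real.sqrt Real.pi * ((2 / 3 : ℝ) ^ ((1:ℝ)/3) * Real.Gamma (2 / 3) * Real.sqrt 3 / 2) * (2 * 2 ^ ((1:ℝ)/6) / Real.pi) /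
    (Real.sqrt 2 * (3:ℝ)^((1:ℝ)/6) * Real.Gamma (2/3) / Real.sqrt Real.pi) = 1 := by
  have hg : 0 < Real.Gamma (2 / 3) := Real.Gamma_pos_of_pos (by norm_num)
  have hp := Real.pi_pos
  have hsp : Real.sqrt Real.pi * Real.sqrt Real.pi = Real.pi := Real.mul_self_sqrt hp.le
  have hsp0 : 0 < Real.sqrt Real.pi := Real.sqrt_pos.2 hp
  have h2 : Real.sqrt 2 = (2:ℝ) ^ ((1:ℝ)/3) * 2 ^ ((1:ℝ)/6) := by
    rw [Real.sqrt_eq_rpow, ← Real.rpow_add (by norm_num)]; norm_num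
  have h3 : Real.sqrt 3 = (3:ℝ) ^ ((1:ℝ)/3) * 3 ^ ((1:ℝ)/6) := by
    rw [Real.sqrt_eq_rpow, ← Real.rpow_add (by norm_num)]; norm_num
  rw [h2, h3, Real.div_rpow (by norm_num) (by norm_num)]
  have a1 : (0:ℝ) < (2:ℝ) ^ ((1:ℝ)/3) := by positivity
  have a2 : (0:ℝ) < (2:ℝ) ^ ((1:ℝ)/6) := by positivity
  have a3 : (0:ℝ) < (3:ℝ) ^ ((1:ℝ)/3) := by positivity
  have a4 : (0:ℝ) < (3:ℝ) ^ ((1:ℝ)/6) := by positivity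
  generalize (2:ℝ) ^ ((1:ℝ)/3) = b1 at *
  generalize (2:ℝ) ^ ((1:ℝ)/6) = b2 at *
  generalize (3:ℝ) ^ ((1:ℝ)/3) = b3 at *
  generalize (3:ℝ) ^ ((1:ℝ)/6) = b4 at *
  generalize Real.Gamma (2/3) = g at *
  generalize Real.sqrt Real.pi = p at *
  rw [← hsp]
  field_simp

lemma ratio_eq (k : ℕ) (hk : 0 < k) (cst : ℝ) (hc : cst ≠ 0) :
    (MCount (2 * k) k : ℝ) / (cst * ((2 * k : ℕ) : ℝ) ^ (3 * (k : ℝ) - 1 / 6)) =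
      Stirling.stirlingSeq (2 * k) * (ep k * (Real.pi * (Real.exp (-(2 * k)) * pk k))) * (2 * 2 ^ ((1:ℝ)/6) / Real.pi) / cst := by
  have hk' : (0:ℝ) < k := by exact_mod_cast hk
  have hp := Real.pi_pos
  rw [MCount_final k hk, Stirling.stirlingSeq]
  push_cast
  have h1 : (2 * (k:ℝ)) ^ (3 * (k : ℝ) - 1 / 6) = (2 * (k:ℝ)) ^ k * (2 * (k:ℝ)) ^ (2 * k) / (2 ^ ((1:ℝ)/6) * (k:ℝ) ^ ((1:ℝ)/6)) := by
    rw [Real.rpow_sub (by positivity), Real.mul_rpow (by norm_num) hk'.le (z := 1/6), ← pow_add, ← Real.rpow_natCast]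
    congr 2
    push_cast; ring
  have h2 : Real.sqrt (2 * (2 * k)) = 2 * ((k:ℝ) * ep k * (k:ℝ) ^ (-(1/6) : ℝ)) := by
    rw [show (2:ℝ) * (2 * k) = 2 ^ 2 * k by ring, Real.sqrt_mul (by norm_num), Real.sqrt_sq (by norm_num), ep, Real.sqrt_eq_rpow]
    congr 1
    nth_rewrite 2 [← Real.rpow_one (k:ℝ)]
    rw [← Real.rpow_add hk', ← Real.rpow_add hk']
    norm_num
  have h3 : (k:ℝ) ^ (-(1/6) : ℝ) = ((k:ℝ) ^ ((1:ℝ)/6))⁻¹ := by rw [Real.rpow_neg hk'.le]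
  have h4 : (2 * (k:ℝ) / Real.exp 1) ^ (2 * k) = (2 * (k:ℝ)) ^ (2 * k) * Real.exp (-(2 * k)) := by
    rw [div_pow, div_eq_mul_inv, ← Real.exp_nat_mul, ← Real.exp_neg]
    push_cast; ring_nf
  rw [h1, h2, h3, h4]
  have he : 0 < ep k := by unfold ep; positivity
  have a1 : 0 < (k:ℝ) ^ ((1:ℝ)/6) := by positivity
  have a2 : (0:ℝ) < (2:ℝ) ^ ((1:ℝ)/6) := by positivity
  have a3 := Real.exp_pos (-(2 * (k:ℝ)))
  generalize (2:ℝ) ^ ((1:ℝ)/6) = b2 at *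
  generalize (k:ℝ) ^ ((1:ℝ)/6) = b1 at *
  generalize Real.exp (-(2 * (k:ℝ))) = b3 at *
  generalize ep k = b4 at *
  field_simp

lemma final : Tendsto (fun k : ℕ => (MCount (2 * k) k : ℝ) / ((Real.sqrt 2 * (3:ℝ) ^ ((1:ℝ)/6) * Real.Gamma (2/3) / Real.sqrt Real.pi)
    * ((2 * k : ℕ) : ℝ) ^ (3 * (k : ℝ) - 1 / 6))) atTop (𝓝 1) := by
  have hg : 0 < Real.Gamma (2 / 3) := Real.Gamma_pos_of_pos (by norm_num)
  have hsp0 : 0 < Real.sqrt Real.pi := Real.sqrt_pos.2 Real.pi_pos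
  have hc : Real.sqrt 2 * (3:ℝ) ^ ((1:ℝ)/6) * Real.Gamma (2/3) / Real.sqrt Real.pi ≠ 0 := by positivity
  have hs : Tendsto (fun k : ℕ => Stirling.stirlingSeq (2 * k)) atTop (𝓝 (Real.sqrt Real.pi)) :=
    Stirling.tendsto_stirlingSeq_sqrt_pi.comp (tendsto_id.const_mul_atTop' (by norm_num))
  have h := ((hs.mul Y_tendsto).mul_const (2 * 2 ^ ((1:ℝ)/6) / Real.pi)).div_const (Real.sqrt 2 * (3:ℝ) ^ ((1:ℝ)/6) * Real.Gamma (2/3) / Real.sqrt Real.pi)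
  rw [const_id] at h
  refine h.congr' ?_
  filter_upwards [eventually_gt_atTop 0] with k hk
  exact (ratio_eq k hk _ hc).symm

end LP

/-- (Lackner–Panholzer, Theorem 4.10, critical case `m = n/2`) Along even `n = 2k`,
`M_{n,n/2} ∼ (√2 · 3^(1/6) · Γ(2/3) / √π) · n^(3n/2 - 1/6)`, i.e. the ratio
`M_{2k,k} / ((√2 · 3^(1/6) · Γ(2/3) / √π) · (2k)^(3k - 1/6))` tends to `1` as `k → ∞`. -/
theorem lackner_panholzer_theorem_4_10_critical :
    Tendsto
      (fun k : ℕ =>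
        (MCount (2 * k) k : ℝ) /
          ((Real.sqrt 2 * (3 : ℝ) ^ ((1 : ℝ) / 6) * Real.Gamma (2 / 3) / Real.sqrt Real.pi) *
            ((2 * k : ℕ) : ℝ) ^ (3 * (k : ℝ) - 1 / 6)))
      atTop (nhds 1) := by
  exact LP.final
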